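/- arXiv:1707.08210 — 3 statements merged into one kernel-verified Lean document; each statement's English description precedes it below -/
import Mathlib

section
/- For every ε > 0 and λ ∈ ℂ, λ is an eigenvalue of the model operator T(ε) if and only if W(ε,λ) = 0, where W(ε,λ) = Ai(ε^{1/3}(λ+i))·Bi(ε^{1/3}(λ−i)) − Ai(ε^{1/3}(λ−i))·Bi(ε^{1/3}(λ+i)) and ε^{1/3} is the real cube root of ε. (Equivalently, the substitution ξ = ε^{1/3}(λ − ix) reduces the eigenvalue problem for T(ε) to finding a nontrivial solution of the Airy equation Y''(ξ) = ξ·Y(ξ) vanishing at both points ε^{1/3}(λ − i) and ε^{1/3}(λ + i).) -/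
open Complex MeasureTheory Real

noncomputable section

/-- `w` is an entire solution of the Airy equation `w'' = z·w`
with prescribed (real) values of `w` and `w'` at the origin. -/
def IsAiry (w : ℂ → ℂ) (w0 w0' : ℝ) : Prop :=
  Differentiable ℂ w ∧ Differentiable ℂ (deriv w) ∧
  (∀ z : ℂ, deriv (deriv w) z = z * w z) ∧
  w 0 = (w0 : ℂ) ∧ deriv w 0 = (w0' : ℂ)

/-- `Ai` is the standard Airy function of the first kind. -/
def IsAiryAi (Ai : ℂ → ℂ) : Prop :=
  IsAiry Ai ((3 : ℝ) ^ (-(2 : ℝ)/3) / Real.Gamma (2/3))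
    (-((3 : ℝ) ^ (-(1 : ℝ)/3)) / Real.Gamma (1/3))

/-- `Bi` is the standard Airy function of the second kind. -/
def IsAiryBi (Bi : ℂ → ℂ) : Prop :=
  IsAiry Bi ((3 : ℝ) ^ (-(1 : ℝ)/6) / Real.Gamma (2/3))
    ((3 : ℝ) ^ ((1 : ℝ)/6) / Real.Gamma (1/3))

/-- The characteristic determinant `W(ε,λ)` of the model problem. -/
def airyW (Ai Bi : ℂ → ℂ) (ε : ℝ) (lam : ℂ) : ℂ :=
  Ai ((ε ^ ((1:ℝ)/3) : ℝ) * (lam + Complex.I)) * Bi ((ε ^ ((1:ℝ)/3) : ℝ) * (lam - Complex.I))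
  - Ai ((ε ^ ((1:ℝ)/3) : ℝ) * (lam - Complex.I)) * Bi ((ε ^ ((1:ℝ)/3) : ℝ) * (lam + Complex.I))

/-- `lam` is an eigenvalue of the model operator `T(ε) y = -ε⁻¹ y'' + i x y`
with Dirichlet boundary conditions on `[-1,1]`. -/
def IsModelEigenvalue (ε : ℝ) (lam : ℂ) : Prop :=
  ∃ y : ℝ → ℂ, ContDiff ℝ 2 y ∧
    (∃ x ∈ Set.Icc (-1 : ℝ) 1, y x ≠ 0) ∧
    (∀ x ∈ Set.Ioo (-1 : ℝ) 1,
      -(ε⁻¹ : ℂ) * deriv (deriv y) x + Complex.I * (x : ℂ) * y x = lam * y x) ∧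
    y (-1) = 0 ∧ y 1 = 0

/-!
For `ε > 0`, the equation `-ε⁻¹ y'' + i x y = λ y` reads `y'' = -ε (λ - i x) y`, and the
substitution `ξ = ε^{1/3} (λ - i x)` turns solutions of the Airy equation into solutions of it.
Any two solutions of `y'' = q y` have constant Wronskian. Let `u`, `v` be solutions with nonzero
Wronskian. If `y` solves the Dirichlet problem on `[a, b]`, then `W(y, u)` and `W(y, v)` are
constant, so `y'(a) u(a) = y'(b) u(b)` and `y'(a) v(a) = y'(b) v(b)`, which forces `y'(a) = 0`,
hence `y = 0`, unless `u(a) v(b) = u(b) v(a)`. Conversely, under that condition `v(a) u - u(a) v`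
vanishes at both endpoints, and its derivative at `a` is minus the Wronskian.
-/

section Wronskian

variable {𝕜 A : Type*}

/-- The Wronskian `u v' - u' v` of two functions, with the sign convention of
`Polynomial.wronskian`. -/
def wronskian [NontriviallyNormedField 𝕜] [NormedCommRing A] [NormedAlgebra 𝕜 A]
    (u v : 𝕜 → A) (x : 𝕜) : A :=
  u x * deriv v x - deriv u x * v x

theorem continuous_wronskian [NontriviallyNormedField 𝕜] [NormedCommRing A] [NormedAlgebra 𝕜 A]
    {u v : 𝕜 → A} (hu : ContDiff 𝕜 1 u) (hv : ContDiff 𝕜 1 v) : Continuous (wronskian u v) :=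
  (hu.continuous.mul hv.continuous_deriv_one).sub (hu.continuous_deriv_one.mul hv.continuous)

theorem deriv_const_mul_sub_const_mul [NontriviallyNormedField 𝕜] [NormedRing A]
    [NormedAlgebra 𝕜 A] {u v : 𝕜 → A} (hu : Differentiable 𝕜 u) (hv : Differentiable 𝕜 v)
    (a b : A) :
    deriv (fun x => a * u x - b * v x) = fun x => a * deriv u x - b * deriv v x :=
  funext fun x => (((hu x).hasDerivAt.const_mul a).sub ((hv x).hasDerivAt.const_mul b)).deriv

/-- `y` solves the linear equation `y'' = q y` on `s`. `C²` regularity is required on the whole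
field and not only on `s`, so that `y` and `y'` are continuous up to the boundary of `s`. -/
structure IsSolutionOn [NontriviallyNormedField 𝕜] [NormedCommRing A] [NormedAlgebra 𝕜 A]
    (q : 𝕜 → A) (s : Set 𝕜) (y : 𝕜 → A) : Prop where
  contDiff : ContDiff 𝕜 2 y
  deriv_deriv : ∀ x ∈ s, deriv (deriv y) x = q x * y x

namespace IsSolutionOn

section NontriviallyNormedField

variable [NontriviallyNormedField 𝕜] [NormedCommRing A] [NormedAlgebra 𝕜 A]
  {q u v y : 𝕜 → A} {s t : Set 𝕜}

theorem differentiable (hy : IsSolutionOn q s y) : Differentiable 𝕜 y :=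
  hy.contDiff.differentiable two_ne_zero

theorem differentiable_deriv (hy : IsSolutionOn q s y) : Differentiable 𝕜 (deriv y) :=
  (ContDiff.deriv' (n := 1) hy.contDiff).differentiable one_ne_zero

theorem mono (hy : IsSolutionOn q s y) (hts : t ⊆ s) : IsSolutionOn q t y :=
  ⟨hy.contDiff, fun x hx => hy.deriv_deriv x (hts hx)⟩

theorem const_mul_sub_const_mul (hu : IsSolutionOn q s u) (hv : IsSolutionOn q s v) (a b : A) :
    IsSolutionOn q s (fun x => a * u x - b * v x) where
  contDiff := (contDiff_const.mul hu.contDiff).sub (contDiff_const.mul hv.contDiff)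
  deriv_deriv x hx := by
    rw [deriv_const_mul_sub_const_mul hu.differentiable hv.differentiable,
      deriv_const_mul_sub_const_mul hu.differentiable_deriv hv.differentiable_deriv]
    linear_combination a * hu.deriv_deriv x hx - b * hv.deriv_deriv x hx

theorem hasDerivAt_wronskian (hu : IsSolutionOn q s u) (hv : IsSolutionOn q s v) {x : 𝕜}
    (hx : x ∈ s) : HasDerivAt (wronskian u v) 0 x := by
  refine (((hu.differentiable x).hasDerivAt.mul (hv.differentiable_deriv x).hasDerivAt).sub
    ((hu.differentiable_deriv x).hasDerivAt.mul (hv.differentiable x).hasDerivAt)).congr_deriv ?_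
  rw [hu.deriv_deriv x hx, hv.deriv_deriv x hx]
  ring

end NontriviallyNormedField

section RCLike

variable [RCLike 𝕜] [NormedCommRing A] [NormedAlgebra 𝕜 A] {q u v y : 𝕜 → A} {s : Set 𝕜}
  {x x₀ : 𝕜}

theorem wronskian_eq (hu : IsSolutionOn q s u) (hv : IsSolutionOn q s v) (hs : IsOpen s)
    (hs' : IsPreconnected s) (hx : x ∈ closure s) (hx₀ : x₀ ∈ closure s) :
    wronskian u v x = wronskian u v x₀ := by
  obtain ⟨z, hz⟩ := closure_nonempty_iff.1 ⟨x, hx⟩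
  have hconst : Set.EqOn (wronskian u v) (fun _ => wronskian u v z) s := fun w hw =>
    hs.is_const_of_deriv_eq_zero hs'
      (fun _ h => (hasDerivAt_wronskian hu hv h).differentiableAt.differentiableWithinAt)
      (fun _ h => (hasDerivAt_wronskian hu hv h).deriv) hw hz
  have hclosure := hconst.closure
    (continuous_wronskian (hu.contDiff.of_le one_le_two) (hv.contDiff.of_le one_le_two))
    continuous_const
  exact (hclosure hx).trans (hclosure hx₀).symm

theorem eq_zero_of_wronskian_ne_zero [NoZeroDivisors A] (hu : IsSolutionOn q s u)
    (hv : IsSolutionOn q s v) (hy : IsSolutionOn q s y) (hs : IsOpen s) (hs' : IsPreconnected s)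
    (hx₀ : x₀ ∈ closure s) (hW : wronskian u v x₀ ≠ 0) (hy₀ : y x₀ = 0) (hy₀' : deriv y x₀ = 0)
    (hx : x ∈ closure s) : y x = 0 := by
  have hyu : wronskian y u x = 0 := by
    rw [wronskian_eq hy hu hs hs' hx hx₀, wronskian, hy₀, hy₀', zero_mul, zero_mul, sub_zero]
  have hyv : wronskian y v x = 0 := by
    rw [wronskian_eq hy hv hs hs' hx hx₀, wronskian, hy₀, hy₀', zero_mul, zero_mul, sub_zero]
  have hexpand : y x * wronskian u v x = u x * wronskian y v x - v x * wronskian y u x := by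
    simp only [wronskian]
    ring
  rw [hyu, hyv, mul_zero, mul_zero, sub_zero, wronskian_eq hu hv hs hs' hx hx₀] at hexpand
  exact (mul_eq_zero.1 hexpand).resolve_right hW

end RCLike

end IsSolutionOn

end Wronskian

section Dirichlet

variable {A : Type*} [NormedCommRing A] [NormedAlgebra ℝ A] {q u v y : ℝ → A} {a b : ℝ}

/-- The Dirichlet problem `y'' = q y` on `(a, b)`, `y a = y b = 0`, has a solution that is not
identically zero on `[a, b]`. -/
def HasNontrivialDirichletSolution (q : ℝ → A) (a b : ℝ) : Prop :=
  ∃ y, IsSolutionOn q (Set.Ioo a b) y ∧ (∃ x ∈ Set.Icc a b, y x ≠ 0) ∧ y a = 0 ∧ y b = 0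

namespace IsSolutionOn

theorem deriv_mul_eq_of_dirichlet (hu : IsSolutionOn q (Set.Ioo a b) u)
    (hy : IsSolutionOn q (Set.Ioo a b) y) (hab : a < b) (ha : y a = 0) (hb : y b = 0) :
    deriv y a * u a = deriv y b * u b := by
  have hcl : closure (Set.Ioo a b) = Set.Icc a b := closure_Ioo hab.ne
  have h := wronskian_eq hy hu isOpen_Ioo isPreconnected_Ioo
    (hcl ▸ Set.left_mem_Icc.2 hab.le) (hcl ▸ Set.right_mem_Icc.2 hab.le)
  simpa only [wronskian, ha, hb, zero_mul, zero_sub, neg_inj] using h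

theorem det_eq_zero_of_hasNontrivialDirichletSolution [NoZeroDivisors A]
    (hu : IsSolutionOn q (Set.Ioo a b) u) (hv : IsSolutionOn q (Set.Ioo a b) v) (hab : a < b)
    (hW : wronskian u v a ≠ 0) (h : HasNontrivialDirichletSolution q a b) :
    u a * v b - u b * v a = 0 := by
  obtain ⟨y, hy, ⟨x, hx, hyx⟩, ha, hb⟩ := h
  have hyu := deriv_mul_eq_of_dirichlet hu hy hab ha hb
  have hyv := deriv_mul_eq_of_dirichlet hv hy hab ha hb
  have hdet : deriv y a * (u a * v b - u b * v a) = 0 := by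
    linear_combination v b * hyu - u b * hyv
  refine (mul_eq_zero.1 hdet).resolve_left fun hya => hyx ?_
  rw [← closure_Ioo hab.ne] at hx
  have ha_mem : a ∈ closure (Set.Ioo a b) := by
    rw [closure_Ioo hab.ne]
    exact Set.left_mem_Icc.2 hab.le
  exact eq_zero_of_wronskian_ne_zero hu hv hy isOpen_Ioo isPreconnected_Ioo ha_mem hW ha hya hx

theorem hasNontrivialDirichletSolution_of_det_eq_zero
    (hu : IsSolutionOn q (Set.Ioo a b) u) (hv : IsSolutionOn q (Set.Ioo a b) v) (hab : a < b)
    (hW : wronskian u v a ≠ 0) (hdet : u a * v b - u b * v a = 0) :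
    HasNontrivialDirichletSolution q a b := by
  have hy := const_mul_sub_const_mul hu hv (v a) (u a)
  refine ⟨_, hy, ?_, by ring, by linear_combination -hdet⟩
  by_contra! hzero
  have ha_mem : a ∈ Set.Icc a b := Set.left_mem_Icc.2 hab.le
  have hya : v a * deriv u a - u a * deriv v a = 0 := by
    rw [← congrFun (deriv_const_mul_sub_const_mul hu.differentiable hv.differentiable _ _) a,
      ← (hy.differentiable a).derivWithin (uniqueDiffOn_Icc hab a ha_mem),
      derivWithin_congr hzero (hzero a ha_mem), derivWithin_fun_const, Pi.zero_apply]
  exact hW (by rw [wronskian]; linear_combination -hya)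

theorem hasNontrivialDirichletSolution_iff_det_eq_zero [NoZeroDivisors A]
    (hu : IsSolutionOn q (Set.Ioo a b) u) (hv : IsSolutionOn q (Set.Ioo a b) v) (hab : a < b)
    (hW : wronskian u v a ≠ 0) :
    HasNontrivialDirichletSolution q a b ↔ u a * v b - u b * v a = 0 :=
  ⟨det_eq_zero_of_hasNontrivialDirichletSolution hu hv hab hW,
    hasNontrivialDirichletSolution_of_det_eq_zero hu hv hab hW⟩

end IsSolutionOn

end Dirichlet

section AffineSubstitution

variable {f g q : ℂ → ℂ} {s : Set ℂ}

theorem deriv_comp_ofReal_affine (hf : Differentiable ℂ f) (α β : ℂ) :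
    deriv (fun x : ℝ => f (α * x + β)) = fun x : ℝ => α * deriv f (α * x + β) := by
  funext x
  have haffine : HasDerivAt (fun z : ℂ => α * z + β) α x := by
    simpa only [mul_one, id_eq] using ((hasDerivAt_id (x : ℂ)).const_mul α).add_const β
  rw [mul_comm]
  exact (((hf _).hasDerivAt.comp (x : ℂ) haffine).comp_ofReal).deriv

theorem wronskian_comp_ofReal_affine (hf : Differentiable ℂ f) (hg : Differentiable ℂ g)
    (α β : ℂ) (x : ℝ) :
    wronskian (fun x : ℝ => f (α * x + β)) (fun x : ℝ => g (α * x + β)) x =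
      α * wronskian f g (α * x + β) := by
  simp only [wronskian, deriv_comp_ofReal_affine hf, deriv_comp_ofReal_affine hg]
  ring

theorem IsSolutionOn.comp_ofReal_affine (hf : IsSolutionOn q s f) (α β : ℂ) :
    IsSolutionOn (fun x : ℝ => α ^ 2 * q (α * x + β)) ((fun x : ℝ => α * x + β) ⁻¹' s)
      (fun x : ℝ => f (α * x + β)) where
  contDiff := (hf.contDiff.restrict_scalars ℝ).comp
    ((contDiff_const.mul Complex.ofRealCLM.contDiff).add contDiff_const)
  deriv_deriv x hx := by
    rw [deriv_comp_ofReal_affine hf.differentiable, deriv_const_mul_field,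
      deriv_comp_ofReal_affine hf.differentiable_deriv]
    linear_combination α ^ 2 * hf.deriv_deriv _ hx

end AffineSubstitution

section Airy

variable {f g : ℂ → ℂ}

theorem IsAiry.isSolutionOn {w0 w0' : ℝ} (hf : IsAiry f w0 w0') :
    IsSolutionOn id Set.univ f :=
  ⟨hf.1.contDiff, fun z _ => hf.2.2.1 z⟩

theorem IsAiryAi.wronskian_zero_ne_zero {Ai Bi : ℂ → ℂ} (hAi : IsAiryAi Ai) (hBi : IsAiryBi Bi) :
    wronskian Ai Bi 0 ≠ 0 := by
  obtain ⟨-, -, -, hAi0, hAi0'⟩ := hAi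
  obtain ⟨-, -, -, hBi0, hBi0'⟩ := hBi
  rw [wronskian, hAi0, hAi0', hBi0, hBi0']
  norm_cast
  refine ne_of_gt ?_
  rw [neg_div, neg_mul, sub_neg_eq_add]
  positivity

/-- The substitution `ξ = ε^{1/3} (λ - i x)` that reduces the model problem to the Airy
equation. -/
def airyVariable (ε : ℝ) (lam : ℂ) (x : ℝ) : ℂ :=
  (ε ^ ((1 : ℝ) / 3) : ℝ) * (lam - Complex.I * x)

theorem airyVariable_eq_affine (ε : ℝ) (lam : ℂ) (x : ℝ) :
    airyVariable ε lam x =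
      -((ε ^ ((1 : ℝ) / 3) : ℝ) * Complex.I) * x + (ε ^ ((1 : ℝ) / 3) : ℝ) * lam := by
  rw [airyVariable]
  ring

theorem airyW_eq_airyVariable (ε : ℝ) (lam : ℂ) :
    airyW f g ε lam =
      f (airyVariable ε lam (-1)) * g (airyVariable ε lam 1) -
        f (airyVariable ε lam 1) * g (airyVariable ε lam (-1)) := by
  simp [airyW, airyVariable]

theorem wronskian_comp_airyVariable_ne_zero (hf : IsSolutionOn id Set.univ f)
    (hg : IsSolutionOn id Set.univ g) (hW : wronskian f g 0 ≠ 0) {ε : ℝ} (hε : 0 < ε) (lam : ℂ)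
    (x : ℝ) :
    wronskian (fun x => f (airyVariable ε lam x)) (fun x => g (airyVariable ε lam x)) x ≠ 0 := by
  have hc : ((ε ^ ((1 : ℝ) / 3) : ℝ) : ℂ) ≠ 0 :=
    Complex.ofReal_ne_zero.2 (Real.rpow_pos_of_pos hε _).ne'
  simp only [airyVariable_eq_affine]
  rw [wronskian_comp_ofReal_affine hf.differentiable hg.differentiable,
    IsSolutionOn.wronskian_eq hf hg isOpen_univ isPreconnected_univ (x₀ := 0)
      (by simp) (by simp)]
  exact mul_ne_zero (neg_ne_zero.2 (mul_ne_zero hc Complex.I_ne_zero)) hW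

theorem IsSolutionOn.comp_airyVariable (hf : IsSolutionOn id Set.univ f) {ε : ℝ} (hε : 0 ≤ ε)
    (lam : ℂ) :
    IsSolutionOn (fun x : ℝ => -ε * (lam - Complex.I * x)) Set.univ
      (fun x => f (airyVariable ε lam x)) := by
  have hcube : ((ε ^ ((1 : ℝ) / 3) : ℝ) : ℂ) ^ 3 = ε := by
    rw [← Complex.ofReal_pow, ← Real.rpow_natCast, ← Real.rpow_mul hε]
    norm_num
  have hcoeff (x : ℝ) : -ε * (lam - Complex.I * x) =
      (-((ε ^ ((1 : ℝ) / 3) : ℝ) * Complex.I)) ^ 2 * airyVariable ε lam x := by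
    rw [airyVariable]
    linear_combination (lam - Complex.I * x) * hcube -
      ((ε ^ ((1 : ℝ) / 3) : ℝ) : ℂ) ^ 3 * (lam - Complex.I * x) * Complex.I_sq
  simp only [hcoeff, airyVariable_eq_affine]
  exact hf.comp_ofReal_affine _ _

end Airy

theorem isModelEigenvalue_iff_hasNontrivialDirichletSolution {ε : ℝ} (hε : ε ≠ 0) (lam : ℂ) :
    IsModelEigenvalue ε lam ↔
      HasNontrivialDirichletSolution (fun x : ℝ => -ε * (lam - Complex.I * x)) (-1) 1 := by
  have hε' : (ε : ℂ) ≠ 0 := Complex.ofReal_ne_zero.2 hε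
  have hode (x : ℝ) (y y'' : ℂ) : -(ε⁻¹ : ℂ) * y'' + Complex.I * x * y = lam * y ↔
      y'' = -ε * (lam - Complex.I * x) * y := by
    field_simp
    constructor <;> intro h <;> linear_combination -h
  simp only [IsModelEigenvalue, HasNontrivialDirichletSolution, hode]
  constructor
  · rintro ⟨y, hy, hne, hsol, ha, hb⟩
    exact ⟨y, ⟨hy, hsol⟩, hne, ha, hb⟩
  · rintro ⟨y, ⟨hy, hsol⟩, hne, ha, hb⟩
    exact ⟨y, hy, hne, hsol, ha, hb⟩

theorem model_eigenvalue_iff_airyW_eq_zero_general {f g : ℂ → ℂ}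
    (hf : IsSolutionOn id Set.univ f) (hg : IsSolutionOn id Set.univ g)
    (hW : wronskian f g 0 ≠ 0) {ε : ℝ} (hε : 0 < ε) (lam : ℂ) :
    IsModelEigenvalue ε lam ↔ airyW f g ε lam = 0 := by
  have hu := (hf.comp_airyVariable hε.le lam).mono (Set.subset_univ (Set.Ioo (-1) 1))
  have hv := (hg.comp_airyVariable hε.le lam).mono (Set.subset_univ (Set.Ioo (-1) 1))
  rw [isModelEigenvalue_iff_hasNontrivialDirichletSolution hε.ne', airyW_eq_airyVariable]
  exact hu.hasNontrivialDirichletSolution_iff_det_eq_zero hv (by norm_num)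
    (wronskian_comp_airyVariable_ne_zero hf hg hW hε lam (-1))

/-- `λ` is an eigenvalue of the model operator `T(ε)` iff `W(ε,λ) = 0`. -/
theorem model_eigenvalue_iff_airyW_eq_zero (Ai Bi : ℂ → ℂ)
    (hAi : IsAiryAi Ai) (hBi : IsAiryBi Bi)
    (ε : ℝ) (hε : 0 < ε) (lam : ℂ) :
    IsModelEigenvalue ε lam ↔ airyW Ai Bi ε lam = 0 :=
  model_eigenvalue_iff_airyW_eq_zero_general hAi.isSolutionOn hBi.isSolutionOn
    (hAi.wronskian_zero_ne_zero hBi) hε lam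
end
end

section
/- Every zero of U₊ lies on one of the three rays arg z = π/3, arg z = π, arg z = −π/3, and every zero of U₋ is either z = 0 or lies on one of these three rays. Moreover the zero sets of U₋ and of U₊ are each invariant under complex conjugation z ↦ conj(z). -/
open Complex MeasureTheory Real

noncomputable section

/-- `U₋ = -√3·Ai + Bi`. -/
def Uminus (Ai Bi : ℂ → ℂ) : ℂ → ℂ := fun z => -(Real.sqrt 3 : ℂ) * Ai z + Bi z

/-- `U₊ = √3·Ai + Bi`. -/
def Uplus (Ai Bi : ℂ → ℂ) : ℂ → ℂ := fun z => (Real.sqrt 3 : ℂ) * Ai z + Bi z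

/-- The moduli of the zeros of `U` on the open ray `arg z = π/3`. -/
def rayZeroModuli (U : ℂ → ℂ) : Set ℝ :=
  {r : ℝ | 0 < r ∧ U ((r : ℂ) * Complex.exp ((π/3 : ℝ) * Complex.I)) = 0}

/-! Along the segment from `0` to a zero `z ≠ 0` of a solution `u` of the Airy equation, the
function `f t = u (t z)` satisfies `f'' = z³ t f`. Integrating the derivative of `conj f * f'` over
`[0, 1]` gives `∫ |f'|² + z³ ∫ t |f|² = 0` as soon as `u 0 = 0` or `u' 0 = 0`, so `z³` is a negative
real number. The combinations `U₊` and `U₋` are chosen so that `U₊' 0 = 0` and `U₋ 0 = 0`.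
Conjugation symmetry is uniqueness for the initial value problem, whose data at `0` are real. -/

open Set
open scoped ComplexConjugate ComplexOrder InnerProductSpace Topology

lemma exists_int_arg_of_pow_neg {z : ℂ} {n : ℕ} (h : z ^ n < 0) :
    ∃ k : ℤ, n * z.arg = (2 * k + 1) * π := by
  have hangle : ((n * z.arg : ℝ) : Real.Angle) = (π : ℝ) := by
    rw [← arg_eq_pi_iff_lt_zero.2 h, arg_pow_coe_angle, ← nsmul_eq_mul, Real.Angle.coe_nsmul]
  obtain ⟨k, hk⟩ := Real.Angle.angle_eq_iff_two_pi_dvd_sub.1 hangle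
  exact ⟨k, by linear_combination hk⟩

lemma arg_of_pow_three_neg {z : ℂ} (h : z ^ 3 < 0) :
    z.arg = π / 3 ∨ z.arg = π ∨ z.arg = -(π / 3) := by
  obtain ⟨k, hk⟩ := exists_int_arg_of_pow_neg h
  push_cast at hk
  have hlower : -2 < k := by
    have : (-2 : ℝ) < k := by nlinarith [neg_pi_lt_arg z, Real.pi_pos]
    exact_mod_cast this
  have hupper : k ≤ 1 := by
    have : (k : ℝ) ≤ 1 := by nlinarith [arg_le_pi z, Real.pi_pos]
    exact_mod_cast this
  obtain rfl | rfl | rfl : k = 0 ∨ k = 1 ∨ k = -1 := by lia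
  · exact .inl (by push_cast at hk; linarith)
  · exact .inr (.inl (by push_cast at hk; linarith))
  · exact .inr (.inr (by push_cast at hk; linarith))

lemma eventually_ne_zero_of_hasDerivAt {𝕜 E : Type*} [NontriviallyNormedField 𝕜]
    [NormedAddCommGroup E] [NormedSpace 𝕜 E] {f : 𝕜 → E} {f' : E} {a : 𝕜}
    (hf : HasDerivAt f f' a) (h : f a ≠ 0 ∨ f' ≠ 0) : ∀ᶠ t in 𝓝[≠] a, f t ≠ 0 :=
  h.elim (fun ha => (hf.continuousAt.eventually_ne ha).filter_mono nhdsWithin_le_nhds)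
    hf.eventually_ne

lemma eq_zero_of_norm_deriv_deriv_le {E : Type*} [NormedAddCommGroup E] [NormedSpace ℝ E]
    {f f' f'' : ℝ → E} {K a b : ℝ}
    (hf : ∀ t ∈ Icc a b, HasDerivAt f (f' t) t) (hf' : ∀ t ∈ Icc a b, HasDerivAt f' (f'' t) t)
    (ha : f a = 0) (ha' : f' a = 0) (hK : ∀ t ∈ Icc a b, ‖f'' t‖ ≤ K * ‖f t‖) :
    ∀ t ∈ Icc a b, f t = 0 := by
  have hpair (t : ℝ) (ht : t ∈ Icc a b) :
      HasDerivAt (fun t => (f t, f' t)) (f' t, f'' t) t := (hf t ht).prodMk (hf' t ht)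
  have hbound (t : ℝ) (ht : t ∈ Ico a b) :
      ‖(f' t, f'' t)‖ ≤ max 1 K * ‖(f t, f' t)‖ := by
    refine max_le ?_ ((hK t (Ico_subset_Icc_self ht)).trans ?_)
    · calc ‖f' t‖ ≤ ‖(f t, f' t)‖ := norm_snd_le (f t, f' t)
        _ ≤ max 1 K * ‖(f t, f' t)‖ := le_mul_of_one_le_left (norm_nonneg _) (le_max_left 1 K)
    · gcongr
      exacts [le_max_right 1 K, norm_fst_le (f t, f' t)]
  have hzero := eq_zero_of_abs_deriv_le_mul_abs_self_of_eq_zero_right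
    (HasDerivAt.continuousOn hpair)
    (fun t ht => (hpair t (Ico_subset_Icc_self ht)).hasDerivWithinAt)
    (Prod.mk_eq_zero.2 ⟨ha, ha'⟩) hbound
  exact fun t ht => (Prod.mk_eq_zero.1 (hzero t ht)).1

section EigenvalueEquation

variable {E : Type*} [NormedAddCommGroup E] [InnerProductSpace ℂ E]
  {f f' : ℝ → E} {p : ℝ → ℝ} {c : ℂ} {a b : ℝ}

lemma integral_norm_deriv_sq_add_mul_integral_eq_sub
    (hf : ∀ t ∈ uIcc a b, HasDerivAt f (f' t) t)
    (hf' : ∀ t ∈ uIcc a b, HasDerivAt f' ((c * p t) • f t) t) (hp : ContinuousOn p (uIcc a b)) :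
    ((∫ t in a..b, ‖f' t‖ ^ 2 : ℝ) : ℂ) + c * (∫ t in a..b, p t * ‖f t‖ ^ 2 : ℝ) =
      ⟪f b, f' b⟫_ℂ - ⟪f a, f' a⟫_ℂ := by
  have hderiv (t : ℝ) (ht : t ∈ uIcc a b) : HasDerivAt (fun t => ⟪f t, f' t⟫_ℂ)
      (((‖f' t‖ ^ 2 : ℝ) : ℂ) + c * (p t * ‖f t‖ ^ 2 : ℝ)) t := by
    refine ((hf t ht).inner ℂ (hf' t ht)).congr_deriv ?_
    rw [inner_smul_right, inner_self_eq_norm_sq_to_K, inner_self_eq_norm_sq_to_K]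
    simp only [coe_algebraMap]
    push_cast
    ring
  have hint : IntervalIntegrable (fun t => ((‖f' t‖ ^ 2 : ℝ) : ℂ)) volume a b :=
    (continuous_ofReal.comp_continuousOn
      ((HasDerivAt.continuousOn hf').norm.pow 2)).intervalIntegrable
  have hint' : IntervalIntegrable (fun t => ((p t * ‖f t‖ ^ 2 : ℝ) : ℂ)) volume a b :=
    (continuous_ofReal.comp_continuousOn
      (hp.mul ((HasDerivAt.continuousOn hf).norm.pow 2))).intervalIntegrable
  rw [← intervalIntegral.integral_eq_sub_of_hasDerivAt hderiv (hint.add (hint'.const_mul c)),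
    intervalIntegral.integral_add hint (hint'.const_mul c), intervalIntegral.integral_const_mul,
    intervalIntegral.integral_ofReal, intervalIntegral.integral_ofReal]

lemma eigenvalue_nonpos (hab : a < b) (hf : ∀ t ∈ Icc a b, HasDerivAt f (f' t) t)
    (hf' : ∀ t ∈ Icc a b, HasDerivAt f' ((c * p t) • f t) t)
    (hp : ContinuousOn p (Icc a b)) (hp_pos : ∀ t ∈ Ioc a b, 0 < p t)
    (hboundary : ⟪f b, f' b⟫_ℂ = ⟪f a, f' a⟫_ℂ) (hne : ∃ t ∈ Ioc a b, f t ≠ 0) : c ≤ 0 := by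
  have hIcc : Icc a b = uIcc a b := (uIcc_of_le hab.le).symm
  have henergy := integral_norm_deriv_sq_add_mul_integral_eq_sub
    (hIcc ▸ hf) (hIcc ▸ hf') (hIcc ▸ hp)
  set A := ∫ t in a..b, ‖f' t‖ ^ 2
  set B := ∫ t in a..b, p t * ‖f t‖ ^ 2
  have hA : 0 ≤ A := intervalIntegral.integral_nonneg hab.le fun t _ => by positivity
  have hB : 0 < B := by
    obtain ⟨s, hs, hfs⟩ := hne
    exact intervalIntegral.integral_pos hab (hp.mul ((HasDerivAt.continuousOn hf).norm.pow 2))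
      (fun t ht => mul_nonneg (hp_pos t ht).le (by positivity))
      ⟨s, Ioc_subset_Icc_self hs, mul_pos (hp_pos s hs) (by positivity)⟩
  have hc : c = (-(A / B) : ℝ) := by
    have : (B : ℂ) ≠ 0 := ofReal_ne_zero.2 hB.ne'
    push_cast
    field_simp
    linear_combination henergy + hboundary
  rw [hc]
  exact_mod_cast neg_nonpos.2 (div_nonneg hA hB.le)

end EigenvalueEquation

lemma hasDerivAt_comp_add_ofReal_mul {E : Type*} [NormedAddCommGroup E] [NormedSpace ℂ E]
    {w : ℂ → E} {w' : E} {z₀ v : ℂ} {t : ℝ} (hw : HasDerivAt w w' (z₀ + t * v)) :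
    HasDerivAt (fun s : ℝ => w (z₀ + s * v)) (v • w') t := by
  have hline : HasDerivAt (fun s : ℝ => z₀ + s * v) v t := by
    simpa using ((hasDerivAt_id t).ofReal_comp.mul_const v).const_add z₀
  exact hw.scomp t hline

lemma eq_zero_of_hasDerivAt_smul {E : Type*} [NormedAddCommGroup E] [NormedSpace ℂ E]
    {q : ℂ → ℂ} {w w' : ℂ → E} {z₀ : ℂ} (hq : Continuous q)
    (hw : ∀ z, HasDerivAt w (w' z) z) (hw' : ∀ z, HasDerivAt w' (q z • w z) z)
    (h₀ : w z₀ = 0) (h₀' : w' z₀ = 0) : w = 0 := by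
  funext z
  set v := z - z₀
  obtain ⟨K, hK⟩ := isCompact_Icc.exists_bound_of_continuousOn (s := Icc (0 : ℝ) 1)
    (f := fun t : ℝ => v ^ 2 * q (z₀ + t * v)) (by fun_prop)
  have hzero := eq_zero_of_norm_deriv_deriv_le (a := 0) (b := 1) (K := K)
    (fun t _ => hasDerivAt_comp_add_ofReal_mul (z₀ := z₀) (v := v) (hw _))
    (fun t _ => (hasDerivAt_comp_add_ofReal_mul (hw' _)).const_smul v)
    (by simpa using h₀) (by simp [h₀'])
    (fun t ht => by
      rw [smul_smul, smul_smul, ← sq, norm_smul]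
      gcongr
      exact hK t ht)
  simpa [v] using hzero 1 (right_mem_Icc.2 zero_le_one)

lemma apply_conj_of_hasDerivAt_mul {q w w' : ℂ → ℂ} {x : ℝ} (hq : Continuous q)
    (hq_conj : ∀ z, q (conj z) = conj (q z))
    (hw : ∀ z, HasDerivAt w (w' z) z) (hw' : ∀ z, HasDerivAt w' (q z * w z) z)
    (hx : conj (w x) = w x) (hx' : conj (w' x) = w' x) (z : ℂ) : w (conj z) = conj (w z) := by
  have hconj (z : ℂ) : HasDerivAt (conj ∘ w ∘ conj) ((conj ∘ w' ∘ conj) z) z := by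
    simpa using (hw (conj z)).conj_conj
  have hconj' (z : ℂ) : HasDerivAt (conj ∘ w' ∘ conj) (q z * (conj ∘ w ∘ conj) z) z := by
    simpa [hq_conj] using (hw' (conj z)).conj_conj
  have hsub := eq_zero_of_hasDerivAt_smul hq (z₀ := x) (fun z => (hw z).sub (hconj z))
    (fun z => ((hw' z).sub (hconj' z)).congr_deriv (mul_sub _ _ _).symm)
    (by simp [hx]) (by simp [hx'])
  simpa [sub_eq_zero] using congrFun hsub (conj z)

lemma pow_add_two_neg_of_apply_eq_zero {E : Type*} [NormedAddCommGroup E]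
    [InnerProductSpace ℂ E] {w w' : ℂ → E} {m : ℕ} {z : ℂ}
    (hw : ∀ z, HasDerivAt w (w' z) z) (hw' : ∀ z, HasDerivAt w' (z ^ m • w z) z)
    (h₀ : ⟪w 0, w' 0⟫_ℂ = 0) (hne : w 0 ≠ 0 ∨ w' 0 ≠ 0) (hz : z ≠ 0) (hwz : w z = 0) :
    z ^ (m + 2) < 0 := by
  have hray (t : ℝ) : HasDerivAt (fun t : ℝ => w (t * z)) (z • w' (t * z)) t := by
    simpa using hasDerivAt_comp_add_ofReal_mul (z₀ := 0) (hw (0 + t * z))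
  have hray' (t : ℝ) : HasDerivAt (fun t : ℝ => z • w' (t * z))
      ((z ^ (m + 2) * (t ^ m : ℝ)) • w (t * z)) t := by
    have h := (hasDerivAt_comp_add_ofReal_mul (z₀ := 0) (hw' (0 + t * z))).const_smul z
    simp only [zero_add, smul_smul] at h
    refine h.congr_deriv (congrArg (· • w (t * z)) ?_)
    push_cast
    ring
  have hne_ray : ∃ t ∈ Ioc (0 : ℝ) 1, w (t * z) ≠ 0 := by
    have hev : ∀ᶠ t : ℝ in 𝓝[>] 0, w (t * z) ≠ 0 :=
      (eventually_ne_zero_of_hasDerivAt (hray 0) (by simpa [hz] using hne)).filter_mono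
        (nhdsGT_le_nhdsNE 0)
    obtain ⟨t, hwt, ht⟩ := (hev.and (Ioc_mem_nhdsGT zero_lt_one)).exists
    exact ⟨t, ht, hwt⟩
  have hle : z ^ (m + 2) ≤ 0 := eigenvalue_nonpos zero_lt_one (fun t _ => hray t)
    (fun t _ => hray' t) (by fun_prop) (fun t ht => pow_pos ht.1 m)
    (by simp [hwz, h₀]) hne_ray
  exact lt_of_le_of_ne hle (pow_ne_zero _ hz)

namespace IsAiry

variable {u v : ℂ → ℂ} {a a' b b' : ℝ}

lemma hasDerivAt (hu : IsAiry u a a') (z : ℂ) : HasDerivAt u (deriv u z) z :=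
  (hu.1 z).hasDerivAt

lemma hasDerivAt_deriv (hu : IsAiry u a a') (z : ℂ) : HasDerivAt (deriv u) (z * u z) z :=
  (hu.2.1 z).hasDerivAt.congr_deriv (hu.2.2.1 z)

lemma apply_zero (hu : IsAiry u a a') : u 0 = a := hu.2.2.2.1

lemma deriv_zero (hu : IsAiry u a a') : deriv u 0 = a' := hu.2.2.2.2

lemma of_hasDerivAt {u' : ℂ → ℂ} (hu : ∀ z, HasDerivAt u (u' z) z)
    (hu' : ∀ z, HasDerivAt u' (z * u z) z) (h₀ : u 0 = a) (h₀' : u' 0 = a') : IsAiry u a a' := by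
  obtain rfl : deriv u = u' := funext fun z => (hu z).deriv
  exact ⟨fun z => (hu z).differentiableAt, fun z => (hu' z).differentiableAt,
    fun z => (hu' z).deriv, h₀, h₀'⟩

lemma const_mul_add (hu : IsAiry u a a') (hv : IsAiry v b b') (c : ℝ) :
    IsAiry (fun z => c * u z + v z) (c * a + b) (c * a' + b') :=
  of_hasDerivAt (fun z => ((hu.hasDerivAt z).const_mul (c : ℂ)).add (hv.hasDerivAt z))
    (fun z => (((hu.hasDerivAt_deriv z).const_mul (c : ℂ)).add (hv.hasDerivAt_deriv z)).congr_deriv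
      (by ring))
    (by simp [hu.apply_zero, hv.apply_zero]) (by simp [hu.deriv_zero, hv.deriv_zero])

lemma apply_conj (hu : IsAiry u a a') (z : ℂ) : u (conj z) = conj (u z) :=
  apply_conj_of_hasDerivAt_mul (x := 0) continuous_id (fun _ => rfl) hu.hasDerivAt
    hu.hasDerivAt_deriv (by simp [hu.apply_zero]) (by simp [hu.deriv_zero]) z

lemma apply_eq_zero_iff_apply_conj (hu : IsAiry u a a') (z : ℂ) :
    u z = 0 ↔ u (conj z) = 0 := by
  rw [hu.apply_conj, map_eq_zero]

lemma arg_of_apply_eq_zero (hu : IsAiry u a a') (haa' : a = 0 ∨ a' = 0) (hne : a ≠ 0 ∨ a' ≠ 0)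
    {z : ℂ} (hz : z ≠ 0) (huz : u z = 0) : z.arg = π / 3 ∨ z.arg = π ∨ z.arg = -(π / 3) := by
  refine arg_of_pow_three_neg (pow_add_two_neg_of_apply_eq_zero (m := 1) hu.hasDerivAt
    (fun z => by simpa using hu.hasDerivAt_deriv z) ?_ ?_ hz huz)
  · simpa [hu.apply_zero, hu.deriv_zero] using haa'.symm
  · simpa [hu.apply_zero, hu.deriv_zero] using hne

end IsAiry

lemma sqrt_mul_rpow {x r s : ℝ} (hx : 0 < x) (h : 1 / 2 + r = s) : √x * x ^ r = x ^ s := by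
  rw [Real.sqrt_eq_rpow, ← Real.rpow_add hx, h]

lemma sqrt_three_mul_rpow_neg_two_thirds :
    √3 * (3 : ℝ) ^ (-(2 : ℝ)/3) = (3 : ℝ) ^ (-(1 : ℝ)/6) :=
  sqrt_mul_rpow three_pos (by norm_num)

lemma sqrt_three_mul_rpow_neg_one_third :
    √3 * (3 : ℝ) ^ (-(1 : ℝ)/3) = (3 : ℝ) ^ ((1 : ℝ)/6) :=
  sqrt_mul_rpow three_pos (by norm_num)

section Airy

variable {Ai Bi : ℂ → ℂ}

lemma isAiry_Uplus (hAi : IsAiryAi Ai) (hBi : IsAiryBi Bi) :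
    IsAiry (Uplus Ai Bi) (2 * ((3 : ℝ) ^ (-(1 : ℝ)/6) / Real.Gamma (2/3))) 0 := by
  convert hAi.const_mul_add hBi √3 using 1
  · rfl
  · linear_combination -sqrt_three_mul_rpow_neg_two_thirds / Real.Gamma (2/3)
  · linear_combination sqrt_three_mul_rpow_neg_one_third / Real.Gamma (1/3)

lemma isAiry_Uminus (hAi : IsAiryAi Ai) (hBi : IsAiryBi Bi) :
    IsAiry (Uminus Ai Bi) 0 (2 * ((3 : ℝ) ^ ((1 : ℝ)/6) / Real.Gamma (1/3))) := by
  convert hAi.const_mul_add hBi (-√3) using 1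
  · funext z
    simp [Uminus]
  · linear_combination sqrt_three_mul_rpow_neg_two_thirds / Real.Gamma (2/3)
  · linear_combination -sqrt_three_mul_rpow_neg_one_third / Real.Gamma (1/3)

end Airy

/-- Every zero of `U₊` lies on one of the rays `arg z = π/3, π, -π/3`; every zero of `U₋`
is either `0` or lies on one of these rays; both zero sets are invariant under conjugation. -/
theorem zeros_of_Uminus_Uplus_on_rays (Ai Bi : ℂ → ℂ)
    (hAi : IsAiryAi Ai) (hBi : IsAiryBi Bi) :
    (∀ z : ℂ, Uplus Ai Bi z = 0 →
      (z.arg = π/3 ∨ z.arg = π ∨ z.arg = -(π/3))) ∧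
    (∀ z : ℂ, Uminus Ai Bi z = 0 →
      (z = 0 ∨ z.arg = π/3 ∨ z.arg = π ∨ z.arg = -(π/3))) ∧
    (∀ z : ℂ, Uminus Ai Bi z = 0 ↔ Uminus Ai Bi ((starRingEnd ℂ) z) = 0) ∧
    (∀ z : ℂ, Uplus Ai Bi z = 0 ↔ Uplus Ai Bi ((starRingEnd ℂ) z) = 0) := by
  have hplus := isAiry_Uplus hAi hBi
  have hminus := isAiry_Uminus hAi hBi
  have hplus_ne : 2 * ((3 : ℝ) ^ (-(1 : ℝ)/6) / Real.Gamma (2/3)) ≠ 0 := by positivity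
  have hminus_ne : 2 * ((3 : ℝ) ^ ((1 : ℝ)/6) / Real.Gamma (1/3)) ≠ 0 := by positivity
  refine ⟨fun z hz => ?_, fun z hz => ?_, hminus.apply_eq_zero_iff_apply_conj,
    hplus.apply_eq_zero_iff_apply_conj⟩
  · have hz₀ : z ≠ 0 := by
      rintro rfl
      exact hplus_ne (ofReal_eq_zero.1 (hplus.apply_zero.symm.trans hz))
    exact hplus.arg_of_apply_eq_zero (.inr rfl) (.inl hplus_ne) hz₀ hz
  · exact or_iff_not_imp_left.2 fun hz₀ =>
      hminus.arg_of_apply_eq_zero (.inl rfl) (.inr hminus_ne) hz₀ hz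
end
end

section
/- Let ε₁ = (√3·α₁/2)³, where α₁ is the smallest modulus of a zero of U₋ on the open ray arg z = π/3. For every ε with 0 < ε < ε₁, every zero λ of the entire function λ ↦ W(ε,λ) is real and is a simple zero, i.e. the derivative ∂W/∂λ(ε,λ) is nonzero there. (Equivalently: for 0 < ε < ε₁ all eigenvalues of the model operator T(ε) are real and simple.) -/
open Complex MeasureTheory Real

noncomputable section

/-!
With `d = ε ^ (1 / 3)` and `m = d λ`, the eigenvalues are the zeros `m` of `K(m + i d, m - i d)`,
where `K(·, y)` is the solution of the Airy equation with value `0` and derivative `1` at `y`.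
Follow these zeros as `d` grows from `0`. They are symmetric about the real axis, and Rellich and
Pohozaev identities for the eigenfunctions show that the nonreal ones stay bounded and that there
are none for small `d`. So nonreal zeros can only be born from a multiple real zero `μ`, that is,
from a point `z = μ + i d` with `K(z, z̄) = 0` at which the two partial derivatives of `K` add up
to zero.

If `0 < arg z < π / 3`, this is impossible: at such a point both partial derivatives are `±1`, so
`exp (-i φ) ∂₁K + exp (i φ) ∂₂K` with `φ = arg z / 2` has modulus `2 sin φ`, but integration along
the level curve of `re (z ^ (3 / 2))` from the real axis to `z` gives a smaller value, as Riemann's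
integral for `K`, whose Bessel factor is at most `1`, shows that `|K(z, z̄)| ≤ |z - z̄|` on the
curve. Otherwise `z` lies on the ray of direction `exp (π i / 3)` from some `a ≤ 0`, at distance
`2 d / √3` from `a`. There is then a solution, real on the real axis, with a zero at `z`; a Picone
comparison of its imaginary part along this ray with `U₋` along the parallel ray from `0` gives
`U₋` a zero at distance at most `2 d / √3` from `0`, which the bound on `ε` rules out.
-/

open ComplexConjugate Set Filter Topology

section AiryEquation

/-- `w` is an entire solution of the Airy equation `w'' = z w`, with derivative `w'`. Carrying the
derivative as a separate function keeps the equation in first-order form. -/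
structure IsAirySolution (w w' : ℂ → ℂ) : Prop where
  hasDerivAt (z : ℂ) : HasDerivAt w (w' z) z
  hasDerivAt_deriv (z : ℂ) : HasDerivAt w' (z * w z) z

/-- `f, g` is the fundamental system of the Airy equation with `f ~ z` and `g ~ 1` at the origin;
`f'` and `g'` are the derivatives. -/
structure IsAiryBasis (f f' g g' : ℂ → ℂ) : Prop where
  left : IsAirySolution f f'
  right : IsAirySolution g g'
  left_zero : f 0 = 0
  left_deriv_zero : f' 0 = 1
  right_zero : g 0 = 1
  right_deriv_zero : g' 0 = 0

/-- For a fundamental system `f, g`, this is the function of `z` that solves the Airy equation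
with value `0` and derivative `1` at `y`. Its zeros are the pairs `z, y` that can be joined by a
nontrivial solution vanishing at both. -/
def airyKernel (f g : ℂ → ℂ) (z y : ℂ) : ℂ := f z * g y - f y * g z

/-- The partial derivative of `airyKernel f g z y` in `z`. By antisymmetry, the one in `y` is
`-airyKernelDeriv f f' g g' y z`. -/
def airyKernelDeriv (f f' g g' : ℂ → ℂ) (z y : ℂ) : ℂ := f' z * g y - f y * g' z

namespace IsAirySolution

variable {w w' v v' : ℂ → ℂ}

theorem continuous (h : IsAirySolution w w') : Continuous w :=
  continuous_iff_continuousAt.2 fun z => (h.hasDerivAt z).continuousAt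

theorem continuous_deriv (h : IsAirySolution w w') : Continuous w' :=
  continuous_iff_continuousAt.2 fun z => (h.hasDerivAt_deriv z).continuousAt

theorem wronskian_eq (hw : IsAirySolution w w') (hv : IsAirySolution v v') (z y : ℂ) :
    w' z * v z - w z * v' z = w' y * v y - w y * v' y := by
  have hderiv (z : ℂ) : HasDerivAt (fun z => w' z * v z - w z * v' z) 0 z :=
    (((hw.hasDerivAt_deriv z).mul (hv.hasDerivAt z)).sub
      ((hw.hasDerivAt z).mul (hv.hasDerivAt_deriv z))).congr_deriv (by ring)
  exact is_const_of_deriv_eq_zero (fun z => (hderiv z).differentiableAt)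
    (fun z => (hderiv z).deriv) z y

theorem conj_conj (hw : IsAirySolution w w') :
    IsAirySolution (fun z => conj (w (conj z))) (fun z => conj (w' (conj z))) where
  hasDerivAt z := by simpa [Function.comp_def] using (hw.hasDerivAt (conj z)).conj_conj
  hasDerivAt_deriv z := by simpa [Function.comp_def] using (hw.hasDerivAt_deriv (conj z)).conj_conj

theorem const_mul (hw : IsAirySolution w w') (a : ℂ) :
    IsAirySolution (fun z => a * w z) (fun z => a * w' z) where
  hasDerivAt z := (hw.hasDerivAt z).const_mul a
  hasDerivAt_deriv z := ((hw.hasDerivAt_deriv z).const_mul a).congr_deriv (by ring)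

theorem add (hw : IsAirySolution w w') (hv : IsAirySolution v v') :
    IsAirySolution (fun z => w z + v z) (fun z => w' z + v' z) where
  hasDerivAt z := (hw.hasDerivAt z).add (hv.hasDerivAt z)
  hasDerivAt_deriv z :=
    ((hw.hasDerivAt_deriv z).add (hv.hasDerivAt_deriv z)).congr_deriv (by ring)

theorem comp_mul_left (hw : IsAirySolution w w') {ω : ℂ} (hω : ω ^ 3 = 1) :
    IsAirySolution (fun z => w (ω * z)) (fun z => ω * w' (ω * z)) := by
  have hmul (z : ℂ) : HasDerivAt (fun z => ω * z) ω z := by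
    simpa using (hasDerivAt_id z).const_mul ω
  exact
    { hasDerivAt := fun z => ((hw.hasDerivAt (ω * z)).comp z (hmul z)).congr_deriv (by ring)
      hasDerivAt_deriv := fun z =>
        (((hw.hasDerivAt_deriv (ω * z)).comp z (hmul z)).const_mul ω).congr_deriv
          (by linear_combination (z * w (ω * z)) * hω) }

end IsAirySolution

theorem airyKernel_self (f g : ℂ → ℂ) (z : ℂ) : airyKernel f g z z = 0 := by
  rw [airyKernel, sub_self]

theorem airyKernel_swap (f g : ℂ → ℂ) (z y : ℂ) : airyKernel f g z y = -airyKernel f g y z := by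
  rw [airyKernel, airyKernel, neg_sub]

namespace IsAiryBasis

variable {f f' g g' w w' : ℂ → ℂ}

theorem wronskian (h : IsAiryBasis f f' g g') (z : ℂ) : f' z * g z - f z * g' z = 1 := by
  rw [h.left.wronskian_eq h.right z 0, h.left_zero, h.left_deriv_zero, h.right_zero]
  ring

theorem isAirySolution_kernel (h : IsAiryBasis f f' g g') (y : ℂ) :
    IsAirySolution (fun z => airyKernel f g z y) (fun z => airyKernelDeriv f f' g g' z y) := by
  convert (h.left.const_mul (g y)).add (h.right.const_mul (-f y)) using 2 <;>
    simp only [airyKernel, airyKernelDeriv] <;> ring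

theorem kernelDeriv_self (h : IsAiryBasis f f' g g') (z : ℂ) :
    airyKernelDeriv f f' g g' z z = 1 :=
  h.wronskian z

theorem eq_kernel (h : IsAiryBasis f f' g g') (hw : IsAirySolution w w') (z y : ℂ) :
    w z = w' y * airyKernel f g z y + w y * airyKernelDeriv f f' g g' y z := by
  rw [airyKernel, airyKernelDeriv]
  linear_combination -w z * h.wronskian z - g z * hw.wronskian_eq h.left z y +
    f z * hw.wronskian_eq h.right z y

theorem deriv_eq_kernel (h : IsAiryBasis f f' g g') (hw : IsAirySolution w w') (z y : ℂ) :
    w' z = w' y * airyKernelDeriv f f' g g' z y - w y * airyKernel f' g' z y := by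
  rw [airyKernel, airyKernelDeriv]
  linear_combination -w' z * h.wronskian z - g' z * hw.wronskian_eq h.left z y +
    f' z * hw.wronskian_eq h.right z y

theorem kernelDeriv_mul_swap (h : IsAiryBasis f f' g g') (z y : ℂ) :
    airyKernelDeriv f f' g g' z y * airyKernelDeriv f f' g g' y z +
      airyKernel f g z y * airyKernel f' g' z y = 1 := by
  simp only [airyKernel, airyKernelDeriv]
  linear_combination (f' y * g y - f y * g' y) * h.wronskian z + h.wronskian y

theorem left_conj (h : IsAiryBasis f f' g g') (z : ℂ) : f (conj z) = conj (f z) := by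
  have := h.eq_kernel h.left.conj_conj (conj z) 0
  simpa [airyKernel, h.left_zero, h.left_deriv_zero, h.right_zero] using this.symm

theorem right_conj (h : IsAiryBasis f f' g g') (z : ℂ) : g (conj z) = conj (g z) := by
  have := h.eq_kernel h.right.conj_conj (conj z) 0
  simpa [airyKernelDeriv, h.left_deriv_zero, h.right_deriv_zero, h.right_zero] using this.symm

theorem kernel_conj (h : IsAiryBasis f f' g g') (z y : ℂ) :
    airyKernel f g (conj z) (conj y) = conj (airyKernel f g z y) := by
  simp only [airyKernel, h.left_conj, h.right_conj, map_sub, map_mul]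

theorem left_mul (h : IsAiryBasis f f' g g') {ω : ℂ} (hω : ω ^ 3 = 1) (z : ℂ) :
    f (ω * z) = ω * f z := by
  simpa [airyKernel, h.left_zero, h.left_deriv_zero, h.right_zero] using
    h.eq_kernel (h.left.comp_mul_left hω) z 0

section Curve

variable {𝕜 : Type*} [NontriviallyNormedField 𝕜] [NormedAlgebra 𝕜 ℂ] {z y : 𝕜 → ℂ} {z' y' : ℂ}
  {t : 𝕜}

theorem hasDerivAt_kernel (h : IsAiryBasis f f' g g') (hz : HasDerivAt z z' t)
    (hy : HasDerivAt y y' t) :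
    HasDerivAt (fun t => airyKernel f g (z t) (y t))
      (airyKernelDeriv f f' g g' (z t) (y t) * z' - airyKernelDeriv f f' g g' (y t) (z t) * y')
      t := by
  refine ((((h.left.hasDerivAt _).comp t hz).mul ((h.right.hasDerivAt _).comp t hy)).sub
    (((h.left.hasDerivAt _).comp t hy).mul ((h.right.hasDerivAt _).comp t hz))).congr_deriv ?_
  simp only [airyKernelDeriv, Function.comp_apply]
  ring

theorem hasDerivAt_kernelDeriv (h : IsAiryBasis f f' g g') (hz : HasDerivAt z z' t)
    (hy : HasDerivAt y y' t) :
    HasDerivAt (fun t => airyKernelDeriv f f' g g' (z t) (y t))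
      (z t * airyKernel f g (z t) (y t) * z' + airyKernel f' g' (z t) (y t) * y') t := by
  refine ((((h.left.hasDerivAt_deriv _).comp t hz).mul ((h.right.hasDerivAt _).comp t hy)).sub
    (((h.left.hasDerivAt _).comp t hy).mul
      ((h.right.hasDerivAt_deriv _).comp t hz))).congr_deriv ?_
  simp only [airyKernel, Function.comp_apply]
  ring

end Curve

/-- By uniqueness `K(·, z) = s K(·, z̄)`, where `s = ∂K(z̄, z) = ∂K(z, z̄)` and `s² = 1`. Hence
`K(·, z̄)` is real on the real axis if `s = 1` and purely imaginary there if `s = -1`. -/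
theorem exists_solution_real_of_kernelDeriv_eq (h : IsAiryBasis f f' g g') {z : ℂ}
    (hz : airyKernel f g z (conj z) = 0)
    (hd : airyKernelDeriv f f' g g' z (conj z) = airyKernelDeriv f f' g g' (conj z) z) :
    ∃ w w' : ℂ → ℂ, IsAirySolution w w' ∧ (∀ x : ℝ, (w x).im = 0) ∧ w z = 0 ∧ w' z ≠ 0 ∧
      (w' z ^ 2).im = 0 := by
  set s := airyKernelDeriv f f' g g' z (conj z)
  have hs : s ^ 2 = 1 := by
    linear_combination s * hd + h.kernelDeriv_mul_swap z (conj z) - airyKernel f' g' z (conj z) * hz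
  have hconj (x : ℝ) : conj (airyKernel f g x (conj z)) = s * airyKernel f g x (conj z) := by
    rw [← h.kernel_conj, conj_ofReal, Complex.conj_conj, h.eq_kernel (h.isAirySolution_kernel z) x
      (conj z), airyKernel_swap f g (conj z) z, hz, ← hd]
    ring
  obtain ⟨η, hη, hηs, hη2⟩ : ∃ η : ℂ, η ≠ 0 ∧ conj η * s = η ∧ (η ^ 2).im = 0 := by
    rcases sq_eq_one_iff.1 hs with hs | hs
    · exact ⟨1, one_ne_zero, by simp [hs], by simp⟩
    · exact ⟨I, I_ne_zero, by simp [hs], by simp⟩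
  refine ⟨_, _, (h.isAirySolution_kernel (conj z)).const_mul η, fun x => ?_, ?_, ?_, ?_⟩
  · rw [← conj_eq_iff_im, map_mul, hconj]
    linear_combination airyKernel f g x (conj z) * hηs
  · rw [hz, mul_zero]
  · exact mul_ne_zero hη fun hs0 => by simp [s, hs0] at hs
  · rwa [mul_pow, hs, mul_one]

end IsAiryBasis

end AiryEquation

section Bessel

/-- The general term of `besselSeries`. -/
def besselTerm (m : ℕ) (u : ℂ) (k : ℕ) : ℂ := (-u) ^ k / (k.factorial * (k + m).factorial)

/-- The entire function `u ↦ ∑ (-u) ^ k / (k! (k + m)!)`, which is `u ^ (-m / 2) J_m(2 √u)` in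
terms of the Bessel function `J_m`. It provides Riemann functions of hyperbolic equations. -/
def besselSeries (m : ℕ) (u : ℂ) : ℂ := ∑' k, besselTerm m u k

theorem norm_besselTerm_le (m : ℕ) (u : ℂ) (k : ℕ) :
    ‖besselTerm m u k‖ ≤ ‖u‖ ^ k / k.factorial := by
  rw [besselTerm, norm_div, norm_mul, norm_pow, norm_neg, Complex.norm_natCast,
    Complex.norm_natCast]
  have : (1 : ℝ) ≤ (k + m).factorial := mod_cast Nat.one_le_iff_ne_zero.2 (Nat.factorial_ne_zero _)
  gcongr
  exact le_mul_of_one_le_right (by positivity) this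

theorem summable_besselTerm (m : ℕ) (u : ℂ) : Summable (besselTerm m u) :=
  .of_norm_bounded (Real.summable_pow_div_factorial ‖u‖) (norm_besselTerm_le m u)

theorem hasDerivAt_besselTerm_succ (m : ℕ) (u : ℂ) (k : ℕ) :
    HasDerivAt (fun u => besselTerm m u (k + 1)) (-besselTerm (m + 1) u k) u := by
  refine (((hasDerivAt_id u).neg.pow (k + 1)).div_const _).congr_deriv ?_
  have : (k.factorial : ℂ) ≠ 0 := mod_cast Nat.factorial_ne_zero _
  have : (k : ℂ) + 1 ≠ 0 := Nat.cast_add_one_ne_zero k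
  have : ((k + (m + 1)).factorial : ℂ) ≠ 0 := mod_cast Nat.factorial_ne_zero _
  rw [besselTerm, Nat.factorial_succ, show k + 1 + m = k + (m + 1) by ring, Nat.add_sub_cancel]
  push_cast
  simp only [Pi.neg_apply, id_eq]
  field_simp

theorem besselSeries_eq_add_tsum (m : ℕ) (u : ℂ) :
    besselSeries m u = 1 / m.factorial + ∑' k, besselTerm m u (k + 1) := by
  rw [besselSeries, (summable_besselTerm m u).tsum_eq_zero_add]
  simp [besselTerm]

theorem besselSeries_zero_right (m : ℕ) : besselSeries m 0 = 1 / m.factorial := by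
  rw [besselSeries_eq_add_tsum, add_eq_left]
  simp [besselTerm]

theorem hasDerivAt_besselSeries (m : ℕ) (u : ℂ) :
    HasDerivAt (besselSeries m) (-besselSeries (m + 1) u) u := by
  have htsum := hasDerivAt_tsum_of_isPreconnected
    (g := fun (k : ℕ) (y : ℂ) => besselTerm m y (k + 1))
    (Real.summable_pow_div_factorial (‖u‖ + 1)) Metric.isOpen_ball
    (convex_ball 0 (‖u‖ + 1)).isPreconnected
    (fun k y _ => hasDerivAt_besselTerm_succ m y k) (fun k y hy => by
      rw [norm_neg]
      have : ‖y‖ ≤ ‖u‖ + 1 := (mem_ball_zero_iff.1 hy).le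
      exact (norm_besselTerm_le _ _ _).trans (by gcongr))
    (y₀ := u) (y := u) (by simp) ((summable_nat_add_iff 1).2 (summable_besselTerm m u)) (by simp)
  rw [tsum_neg] at htsum
  exact (htsum.const_add (1 / (m.factorial : ℂ))).congr_of_eventuallyEq
    (.of_forall (besselSeries_eq_add_tsum m))

theorem continuous_besselSeries (m : ℕ) : Continuous (besselSeries m) :=
  continuous_iff_continuousAt.2 fun u => (hasDerivAt_besselSeries m u).continuousAt

theorem besselSeries_recurrence (u : ℂ) :
    besselSeries 0 u - besselSeries 1 u + u * besselSeries 2 u = 0 := by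
  have hterm (k : ℕ) :
      besselTerm 0 u (k + 1) - besselTerm 1 u (k + 1) + u * besselTerm 2 u k = 0 := by
    have : (k.factorial : ℂ) ≠ 0 := mod_cast Nat.factorial_ne_zero _
    have : (k : ℂ) + 1 ≠ 0 := Nat.cast_add_one_ne_zero k
    have : (k : ℂ) + 1 + 1 ≠ 0 := mod_cast Nat.succ_ne_zero (k + 1)
    simp only [besselTerm, add_zero, Nat.factorial_succ]
    push_cast
    field_simp
    ring
  have h0 := (summable_nat_add_iff 1).2 (summable_besselTerm 0 u)
  have h1 := (summable_nat_add_iff 1).2 (summable_besselTerm 1 u)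
  have htsum : ∑' k, (besselTerm 0 u (k + 1) - besselTerm 1 u (k + 1) + u * besselTerm 2 u k) = 0 :=
    (tsum_congr hterm).trans tsum_zero
  rw [(h0.sub h1).tsum_add ((summable_besselTerm 2 u).mul_left u), h0.tsum_sub h1,
    tsum_mul_left] at htsum
  rw [besselSeries_eq_add_tsum 0, besselSeries_eq_add_tsum 1, besselSeries, Nat.factorial_zero,
    Nat.factorial_one]
  linear_combination htsum

theorem ofReal_re_besselSeries (m : ℕ) (u : ℝ) :
    ((besselSeries m u).re : ℂ) = besselSeries m u := by
  rw [← conj_eq_iff_re]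
  simp [besselSeries, besselTerm, Complex.conj_tsum]

/-- The energy `B₀² + u B₁²` is decreasing. -/
theorem norm_besselSeries_zero_le_one {u : ℝ} (hu : 0 ≤ u) : ‖besselSeries 0 u‖ ≤ 1 := by
  set B : ℕ → ℝ → ℝ := fun m x => (besselSeries m x).re
  have hB (m : ℕ) (x : ℝ) : HasDerivAt (B m) (-B (m + 1) x) x := by
    simpa using (hasDerivAt_besselSeries m x).real_of_complex
  have henergy (x : ℝ) : HasDerivAt (fun x => B 0 x ^ 2 + x * B 1 x ^ 2) (-B 1 x ^ 2) x := by
    have hrec : B 0 x - B 1 x + x * B 2 x = 0 := by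
      simpa using congrArg re (besselSeries_recurrence x)
    refine (((hB 0 x).pow 2).add ((hasDerivAt_id x).mul ((hB 1 x).pow 2))).congr_deriv ?_
    simp only [Nat.cast_ofNat, id_eq, Pi.pow_apply]
    linear_combination (-2 * B 1 x) * hrec
  have hanti : Antitone fun x => B 0 x ^ 2 + x * B 1 x ^ 2 :=
    antitone_of_deriv_nonpos (fun x => (henergy x).differentiableAt) fun x => by
      rw [(henergy x).deriv, neg_nonpos]
      positivity
  have hle : B 0 u ^ 2 + u * B 1 u ^ 2 ≤ 1 := by simpa [B, besselSeries_zero_right] using hanti hu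
  rw [← ofReal_re_besselSeries, norm_real, Real.norm_eq_abs, ← sq_le_one_iff_abs_le_one]
  exact le_trans (le_add_of_nonneg_right (by positivity)) hle

end Bessel

section Leibniz

variable {E : Type*} [NormedAddCommGroup E] [NormedSpace ℝ E] {F F' : ℝ → ℝ → E}

theorem hasDerivAt_integral_param (hF : Continuous F.uncurry) (hF' : Continuous F'.uncurry)
    (hd : ∀ s x, HasDerivAt (fun s => F s x) (F' s x) s) (a b s : ℝ) :
    HasDerivAt (fun s => ∫ x in a..b, F s x) (∫ x in a..b, F' s x) s := by
  obtain ⟨C, hC⟩ := ((isCompact_closedBall s 1).prod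
    (isCompact_uIcc (a := a) (b := b))).exists_bound_of_continuousOn hF'.continuousOn
  refine (intervalIntegral.hasDerivAt_integral_of_dominated_loc_of_deriv_le (bound := fun _ => C)
    (Metric.ball_mem_nhds s one_pos) (.of_forall fun s => (hF.uncurry_left s).aestronglyMeasurable)
    ((hF.uncurry_left s).intervalIntegrable a b) (hF'.uncurry_left s).aestronglyMeasurable
    (.of_forall fun x hx s hs => ?_) intervalIntegrable_const
    (.of_forall fun x _ s _ => hd s x)).2
  exact hC (s, x) ⟨Metric.ball_subset_closedBall hs, uIoc_subset_uIcc hx⟩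

variable [CompleteSpace E]

theorem hasDerivAt_integral_of_continuous_uncurry (hF : Continuous F.uncurry) (b : ℝ) :
    HasDerivAt (fun s => ∫ x in b..s, F s x) (F b b) b := by
  rw [hasDerivAt_iff_isLittleO, Asymptotics.isLittleO_iff]
  intro ε hε
  obtain ⟨δ, hδ, hclose⟩ := Metric.continuousAt_iff.1 (hF.continuousAt (x := (b, b))) ε hε
  filter_upwards [Metric.ball_mem_nhds b hδ] with s hs
  have hint : IntervalIntegrable (F s) volume b s :=
    (hF.uncurry_left s).intervalIntegrable _ _
  rw [intervalIntegral.integral_same, sub_zero, ← intervalIntegral.integral_const,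
    ← intervalIntegral.integral_sub hint intervalIntegrable_const, Real.norm_eq_abs]
  refine intervalIntegral.norm_integral_le_of_norm_le_const fun x hx => ?_
  have hx' : dist x b ≤ dist s b := by
    rw [Real.dist_eq, Real.dist_eq]
    exact abs_sub_left_of_mem_uIcc (uIoc_subset_uIcc hx)
  simpa [dist_eq_norm] using
    (hclose (x := (s, x)) (max_lt (Metric.mem_ball.1 hs) (hx'.trans_lt hs))).le

theorem hasDerivAt_integral_param_of_upper (hF : Continuous F.uncurry)
    (hF' : Continuous F'.uncurry) (hd : ∀ s x, HasDerivAt (fun s => F s x) (F' s x) s) (a s : ℝ) :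
    HasDerivAt (fun s => ∫ x in a..s, F s x) (F s s + ∫ x in a..s, F' s x) s := by
  refine ((hasDerivAt_integral_of_continuous_uncurry hF s).add
    (hasDerivAt_integral_param hF hF' hd a s s)).congr_of_eventuallyEq (.of_forall fun t => ?_)
  have hint (c d : ℝ) : IntervalIntegrable (F t) volume c d :=
    (hF.uncurry_left t).intervalIntegrable c d
  simp only [Pi.add_apply]
  rw [add_comm, intervalIntegral.integral_add_adjacent_intervals (hint a s) (hint s t)]

end Leibniz

section RiemannFormula

/-- The argument of the Riemann function `besselSeries 0` of the Airy equation, at the point `x` of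
the circle of radius `r`, for the integral from `a` to `s`. With `v = circleMap 0 r` it is
`(v x ^ 3 - v s ^ 3) (v x ^ 3 - v a ^ 3) / (9 v x ^ 3)`, written without a division. -/
def arcPhase (r a s x : ℝ) : ℂ :=
  (circleMap 0 r x ^ 3 - circleMap 0 r s ^ 3) * (1 - circleMap 0 1 (3 * (a - x))) / 9

/-- The derivative of `arcPhase r a s x` with respect to the end point `circleMap 0 r s`. -/
def arcPhaseDeriv (r a s x : ℝ) : ℂ :=
  -(circleMap 0 r s ^ 2 / 3) * (1 - circleMap 0 1 (3 * (a - x)))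

/-- The second derivative of `arcPhase r a s x` with respect to the end point `circleMap 0 r s`. -/
def arcPhaseDeriv₂ (r a s x : ℝ) : ℂ :=
  -(2 * circleMap 0 r s / 3) * (1 - circleMap 0 1 (3 * (a - x)))

/-- The factor for which `besselSeries 1 (arcPhase r a s x) * arcWeight r a s x` is a primitive, in
`x`, of the integrand produced by differentiating `riemannIntegral` twice, up to a multiple of the
integrand of `riemannIntegral` itself. -/
def arcWeight (r a s x : ℝ) : ℂ :=
  circleMap 0 r s / 3 * (circleMap 0 r x * (1 - circleMap 0 1 (3 * (a - x))))

/-- Riemann's integral along the arc from `a` to `s` of the circle of radius `r`. -/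
def riemannIntegral (r a s : ℝ) : ℂ :=
  ∫ x in a..s, besselSeries 0 (arcPhase r a s x) * (circleMap 0 r x * I)

/-- The derivative of `riemannIntegral r a s` with respect to the end point `circleMap 0 r s`. -/
def riemannIntegralDeriv (r a s : ℝ) : ℂ :=
  1 - ∫ x in a..s, besselSeries 1 (arcPhase r a s x) * arcPhaseDeriv r a s x * (circleMap 0 r x * I)

variable (r a s x : ℝ)

theorem continuous_arcPhase : Continuous (arcPhase r a).uncurry := by
  simp only [Function.uncurry_def, arcPhase]
  fun_prop

theorem continuous_arcPhaseDeriv : Continuous (arcPhaseDeriv r a).uncurry := by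
  simp only [Function.uncurry_def, arcPhaseDeriv]
  fun_prop

theorem continuous_arcPhaseDeriv₂ : Continuous (arcPhaseDeriv₂ r a).uncurry := by
  simp only [Function.uncurry_def, arcPhaseDeriv₂]
  fun_prop

theorem hasDerivAt_arcPhase :
    HasDerivAt (fun s => arcPhase r a s x) (arcPhaseDeriv r a s x * (circleMap 0 r s * I)) s := by
  refine (((((hasDerivAt_circleMap 0 r s).pow 3).const_sub _).mul_const _).div_const 9).congr_deriv
    ?_
  rw [arcPhaseDeriv]
  push_cast
  ring

theorem hasDerivAt_arcPhaseDeriv :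
    HasDerivAt (fun s => arcPhaseDeriv r a s x)
      (arcPhaseDeriv₂ r a s x * (circleMap 0 r s * I)) s := by
  refine ((((hasDerivAt_circleMap 0 r s).pow 2).div_const 3).neg.mul_const _).congr_deriv ?_
  rw [arcPhaseDeriv₂]
  push_cast
  ring

theorem hasDerivAt_one_sub_circleMap :
    HasDerivAt (fun x => 1 - circleMap 0 1 (3 * (a - x))) (circleMap 0 1 (3 * (a - x)) * (3 * I))
      x := by
  have hangle : HasDerivAt (fun x => 3 * (a - x)) (-3) x := by
    simpa using ((hasDerivAt_id x).const_sub a).const_mul 3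
  refine (((hasDerivAt_circleMap 0 1 (3 * (a - x))).scomp x hangle).const_sub 1).congr_deriv ?_
  rw [real_smul]
  push_cast
  ring

theorem hasDerivAt_besselSeries_arcPhase (m : ℕ) :
    HasDerivAt (fun s => besselSeries m (arcPhase r a s x))
      (-besselSeries (m + 1) (arcPhase r a s x) *
        (arcPhaseDeriv r a s x * (circleMap 0 r s * I))) s :=
  HasDerivAt.comp (h := fun s => arcPhase r a s x) s (hasDerivAt_besselSeries m _)
    (hasDerivAt_arcPhase r a s x)

theorem hasDerivAt_riemannIntegral :
    HasDerivAt (riemannIntegral r a) (circleMap 0 r s * I * riemannIntegralDeriv r a s) s := by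
  have hB := continuous_besselSeries
  have hu : Continuous fun p : ℝ × ℝ => arcPhase r a p.1 p.2 := continuous_arcPhase r a
  have hu₁ : Continuous fun p : ℝ × ℝ => arcPhaseDeriv r a p.1 p.2 := continuous_arcPhaseDeriv r a
  have hdiag : arcPhase r a s s = 0 := by simp [arcPhase]
  refine (hasDerivAt_integral_param_of_upper (by simp only [Function.uncurry_def]; fun_prop)
    (by simp only [Function.uncurry_def]; fun_prop)
    (fun s x => (hasDerivAt_besselSeries_arcPhase r a s x 0).mul_const _) a s).congr_deriv ?_
  rw [riemannIntegralDeriv, mul_sub, ← intervalIntegral.integral_const_mul, hdiag,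
    besselSeries_zero_right, sub_eq_add_neg, ← intervalIntegral.integral_neg]
  congr 1
  · simp
  · refine intervalIntegral.integral_congr fun x _ => ?_
    ring

theorem hasDerivAt_arcPhase_right :
    HasDerivAt (arcPhase r a s)
      (I / 3 * (circleMap 0 r x ^ 3 - circleMap 0 r s ^ 3 * circleMap 0 1 (3 * (a - x)))) x := by
  refine (((((hasDerivAt_circleMap 0 r x).pow 3).sub_const (circleMap 0 r s ^ 3)).mul
    (hasDerivAt_one_sub_circleMap a x)).div_const 9).congr_deriv ?_
  simp only [Pi.pow_apply]
  push_cast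
  ring

theorem hasDerivAt_arcWeight :
    HasDerivAt (arcWeight r a s)
      ((arcPhaseDeriv₂ r a s x + circleMap 0 r s) * (circleMap 0 r x * I)) x := by
  refine (((hasDerivAt_circleMap 0 r x).mul (hasDerivAt_one_sub_circleMap a x)).const_mul
    (circleMap 0 r s / 3)).congr_deriv ?_
  rw [arcPhaseDeriv₂]
  ring

theorem hasDerivAt_besselSeries_mul_arcWeight :
    HasDerivAt (fun x => besselSeries 1 (arcPhase r a s x) * arcWeight r a s x)
      ((-besselSeries 2 (arcPhase r a s x) * arcPhaseDeriv r a s x ^ 2 +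
        besselSeries 1 (arcPhase r a s x) * arcPhaseDeriv₂ r a s x) * (circleMap 0 r x * I) +
        circleMap 0 r s * (besselSeries 0 (arcPhase r a s x) * (circleMap 0 r x * I))) x := by
  have hweight : I / 3 * (circleMap 0 r x ^ 3 - circleMap 0 r s ^ 3 * circleMap 0 1 (3 * (a - x))) *
      arcWeight r a s x =
      (arcPhaseDeriv r a s x ^ 2 + circleMap 0 r s * arcPhase r a s x) * (circleMap 0 r x * I) := by
    rw [arcWeight, arcPhaseDeriv, arcPhase]
    ring
  refine (((hasDerivAt_besselSeries 1 _).comp x (hasDerivAt_arcPhase_right r a s x)).mul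
    (hasDerivAt_arcWeight r a s x)).congr_deriv ?_
  rw [Function.comp_apply]
  linear_combination -besselSeries 2 (arcPhase r a s x) * hweight -
    circleMap 0 r s * (circleMap 0 r x * I) * besselSeries_recurrence (arcPhase r a s x)

theorem integral_besselSeries_arcPhase :
    ∫ x in a..s, (-besselSeries 2 (arcPhase r a s x) * arcPhaseDeriv r a s x ^ 2 +
        besselSeries 1 (arcPhase r a s x) * arcPhaseDeriv₂ r a s x) * (circleMap 0 r x * I) =
      -arcPhaseDeriv r a s s - circleMap 0 r s * riemannIntegral r a s := by
  have hB := continuous_besselSeries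
  have hu : Continuous (arcPhase r a s) := (continuous_arcPhase r a).uncurry_left s
  have hu₁ : Continuous (arcPhaseDeriv r a s) := (continuous_arcPhaseDeriv r a).uncurry_left s
  have hu₂ : Continuous (arcPhaseDeriv₂ r a s) := (continuous_arcPhaseDeriv₂ r a).uncurry_left s
  have hftc := intervalIntegral.integral_eq_sub_of_hasDerivAt
    (fun x _ => hasDerivAt_besselSeries_mul_arcWeight r a s x)
    (Continuous.intervalIntegrable (by fun_prop) a s)
  rw [intervalIntegral.integral_add (Continuous.intervalIntegrable (by fun_prop) _ _)
    (Continuous.intervalIntegrable (by fun_prop) _ _), intervalIntegral.integral_const_mul,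
    ← riemannIntegral.eq_1] at hftc
  have ha : arcWeight r a s a = 0 := by simp [arcWeight, circleMap_zero]
  have hs : arcWeight r a s s = -arcPhaseDeriv r a s s := by rw [arcWeight, arcPhaseDeriv]; ring
  have hdiag : arcPhase r a s s = 0 := by simp [arcPhase]
  rw [ha, hs, hdiag, besselSeries_zero_right, Nat.factorial_one, Nat.cast_one] at hftc
  linear_combination hftc

theorem hasDerivAt_riemannIntegralDeriv :
    HasDerivAt (riemannIntegralDeriv r a)
      (circleMap 0 r s * I * (circleMap 0 r s * riemannIntegral r a s)) s := by
  have hB := continuous_besselSeries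
  have hu : Continuous fun p : ℝ × ℝ => arcPhase r a p.1 p.2 := continuous_arcPhase r a
  have hu₁ : Continuous fun p : ℝ × ℝ => arcPhaseDeriv r a p.1 p.2 := continuous_arcPhaseDeriv r a
  have hu₂ : Continuous fun p : ℝ × ℝ => arcPhaseDeriv₂ r a p.1 p.2 :=
    continuous_arcPhaseDeriv₂ r a
  have hdiag : arcPhase r a s s = 0 := by simp [arcPhase]
  have hderiv (s x : ℝ) : HasDerivAt
      (fun s => besselSeries 1 (arcPhase r a s x) * arcPhaseDeriv r a s x * (circleMap 0 r x * I))
      (circleMap 0 r s * I * ((-besselSeries 2 (arcPhase r a s x) * arcPhaseDeriv r a s x ^ 2 +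
        besselSeries 1 (arcPhase r a s x) * arcPhaseDeriv₂ r a s x) * (circleMap 0 r x * I))) s :=
    (((hasDerivAt_besselSeries_arcPhase r a s x 1).mul
      (hasDerivAt_arcPhaseDeriv r a s x)).mul_const _).congr_deriv (by ring)
  refine ((hasDerivAt_integral_param_of_upper (by simp only [Function.uncurry_def]; fun_prop)
    (by simp only [Function.uncurry_def]; fun_prop) hderiv a s).const_sub 1).congr_deriv ?_
  rw [intervalIntegral.integral_const_mul, integral_besselSeries_arcPhase, hdiag,
    besselSeries_zero_right, Nat.factorial_one, Nat.cast_one]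
  ring

end RiemannFormula

namespace IsAiryBasis

variable {f f' g g' : ℂ → ℂ}

theorem kernel_eq_of_hasDerivAt (h : IsAiryBasis f f' g g') {v v' H H' : ℝ → ℂ} {a : ℝ}
    (hv : ∀ s, HasDerivAt v (v' s) s) (hH : ∀ s, HasDerivAt H (v' s * H' s) s)
    (hH' : ∀ s, HasDerivAt H' (v' s * (v s * H s)) s) (ha : H a = 0) (ha' : H' a = 1) (b : ℝ) :
    airyKernel f g (v b) (v a) = H b := by
  have hconst {w w' : ℂ → ℂ} (hw : IsAirySolution w w') :
      H b * w' (v b) - H' b * w (v b) = -w (v a) := by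
    have hderiv (s : ℝ) : HasDerivAt (fun s => H s * w' (v s) - H' s * w (v s)) 0 s :=
      (((hH s).mul ((hw.hasDerivAt_deriv (v s)).comp s (hv s))).sub
        ((hH' s).mul ((hw.hasDerivAt (v s)).comp s (hv s)))).congr_deriv
          (by simp only [Function.comp_apply]; ring)
    rw [is_const_of_deriv_eq_zero (fun s => (hderiv s).differentiableAt)
      (fun s => (hderiv s).deriv) b a, ha, ha']
    ring
  rw [airyKernel]
  linear_combination f (v b) * hconst h.right - g (v b) * hconst h.left + H b * h.wronskian (v b)

theorem kernel_circleMap (h : IsAiryBasis f f' g g') (r a b : ℝ) :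
    airyKernel f g (circleMap 0 r b) (circleMap 0 r a) = riemannIntegral r a b :=
  h.kernel_eq_of_hasDerivAt (hasDerivAt_circleMap 0 r) (hasDerivAt_riemannIntegral r a)
    (hasDerivAt_riemannIntegralDeriv r a) (by simp [riemannIntegral])
    (by simp [riemannIntegralDeriv]) b

end IsAiryBasis

theorem circleMap_mul_circleMap_neg (x : ℝ) : circleMap 0 1 x * circleMap 0 1 (-x) = 1 := by
  rw [circleMap_zero_mul, add_neg_cancel, mul_one, circleMap_zero]
  simp

theorem arcPhase_neg_self (r φ x : ℝ) :
    arcPhase r (-φ) φ x = (2 / 9 * r ^ 3 * (Real.cos (3 * x) - Real.cos (3 * φ)) : ℝ) := by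
  have hsplit : circleMap 0 1 (3 * (-φ - x)) =
      circleMap 0 1 (-(3 * φ)) * circleMap 0 1 (-(3 * x)) := by
    rw [circleMap_zero_mul]
    congr 1 <;> ring
  have hpow (y : ℝ) : circleMap 0 r y ^ 3 = r ^ 3 * circleMap 0 1 (3 * y) := by
    rw [circleMap_zero_pow, circleMap_zero, circleMap_zero]
    push_cast
    ring
  have hcos (y : ℝ) : 2 * (Real.cos y : ℂ) = circleMap 0 1 y + circleMap 0 1 (-y) := by
    rw [← conj_circleMap_zero, add_conj, circleMap_zero_re]
    push_cast
    ring
  rw [arcPhase, hsplit, hpow, hpow]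
  simp only [ofReal_mul, ofReal_sub, ofReal_div, ofReal_pow, ofReal_ofNat]
  linear_combination (r ^ 3 / 9 : ℂ) * (hcos (3 * φ) - hcos (3 * x) +
    circleMap 0 1 (-(3 * x)) * circleMap_mul_circleMap_neg (3 * φ) -
    circleMap 0 1 (-(3 * φ)) * circleMap_mul_circleMap_neg (3 * x))

theorem abs_im_riemannIntegral_neg_self_le {r φ : ℝ} (hr : 0 ≤ r) (hφ : 0 ≤ φ) (hφ' : φ ≤ π / 3) :
    |(riemannIntegral r (-φ) φ).im| ≤ 2 * r * Real.sin φ := by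
  have hB := continuous_besselSeries
  have hu : Continuous (arcPhase r (-φ) φ) := (continuous_arcPhase r (-φ)).uncurry_left φ
  have him : (riemannIntegral r (-φ) φ).im = ∫ x in -φ..φ,
      (besselSeries 0 (arcPhase r (-φ) φ x) * (circleMap 0 r x * I)).im :=
    (imCLM.intervalIntegral_comp_comm (Continuous.intervalIntegrable (by fun_prop) _ _)).symm
  have hbound {x : ℝ} (hx : x ∈ Ioc (-φ) φ) :
      ‖(besselSeries 0 (arcPhase r (-φ) φ x) * (circleMap 0 r x * I)).im‖ ≤ r * Real.cos x := by
    have hcos : 0 ≤ Real.cos x := Real.cos_nonneg_of_neg_pi_div_two_le_of_le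
      (by linarith [hx.1, pi_pos]) (by linarith [hx.2, pi_pos])
    have hcos3 : Real.cos (3 * φ) ≤ Real.cos (3 * x) := by
      rw [← Real.cos_abs (3 * x)]
      refine Real.cos_le_cos_of_nonneg_of_le_pi (abs_nonneg _) (by linarith) (abs_le.2 ?_)
      constructor <;> linarith [hx.1, hx.2]
    have hphase : 0 ≤ 2 / 9 * r ^ 3 * (Real.cos (3 * x) - Real.cos (3 * φ)) :=
      mul_nonneg (by positivity) (sub_nonneg.2 hcos3)
    rw [arcPhase_neg_self, ← ofReal_re_besselSeries, im_ofReal_mul, mul_I_im, circleMap_zero_re,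
      norm_mul, ← norm_real, ofReal_re_besselSeries, Real.norm_of_nonneg (mul_nonneg hr hcos)]
    exact mul_le_of_le_one_left (mul_nonneg hr hcos) (norm_besselSeries_zero_le_one hphase)
  rw [him, ← Real.norm_eq_abs]
  calc _ ≤ ∫ x in -φ..φ, r * Real.cos x :=
        intervalIntegral.norm_integral_le_of_norm_le (by linarith) (.of_forall fun x => hbound)
          (Continuous.intervalIntegrable (by fun_prop) _ _)
    _ = 2 * r * Real.sin φ := by
        rw [intervalIntegral.integral_const_mul, integral_cos, Real.sin_neg]
        ring

theorem IsAiryBasis.norm_kernel_conj_circleMap_le {f f' g g' : ℂ → ℂ}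
    (h : IsAiryBasis f f' g g') {r φ : ℝ} (hr : 0 ≤ r) (hφ : 0 ≤ φ) (hφ' : φ ≤ π / 3) :
    ‖airyKernel f g (circleMap 0 r φ) (circleMap 0 r (-φ))‖ ≤ 2 * r * Real.sin φ := by
  have hre : (airyKernel f g (circleMap 0 r φ) (circleMap 0 r (-φ))).re = 0 := by
    have hconj := h.kernel_conj (circleMap 0 r φ) (circleMap 0 r (-φ))
    rw [conj_circleMap_zero, conj_circleMap_zero, neg_neg, airyKernel_swap] at hconj
    simpa [neg_eq_self] using congrArg re hconj
  rw [← abs_im_eq_norm.2 hre, h.kernel_circleMap]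
  exact abs_im_riemannIntegral_neg_self_le hr hφ hφ'

section LevelCurve

/-- The distance from the origin of the point of argument `2 * x` on the level curve
`re (z ^ (3 / 2)) = C ^ (3 / 2)` in the sector `|arg z| < π / 3`. -/
def levelRadius (C x : ℝ) : ℝ := C * Real.cos (3 * x) ^ (-(2 / 3) : ℝ)

/-- The level curve `re (z ^ (3 / 2)) = C ^ (3 / 2)`, with half of the argument as parameter. -/
def levelCurve (C x : ℝ) : ℂ := circleMap 0 (levelRadius C x) (2 * x)

variable {C x : ℝ}

theorem levelRadius_pos (hC : 0 < C) (hx : 0 < Real.cos (3 * x)) : 0 < levelRadius C x :=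
  mul_pos hC (Real.rpow_pos_of_pos hx _)

theorem hasDerivAt_cos_three_mul (x : ℝ) :
    HasDerivAt (fun x => Real.cos (3 * x)) (-(3 * Real.sin (3 * x))) x :=
  ((hasDerivAt_id x).const_mul 3).cos.congr_deriv (by simp only [id]; ring)

theorem hasDerivAt_levelRadius (C : ℝ) (hx : 0 < Real.cos (3 * x)) :
    HasDerivAt (levelRadius C) (2 * levelRadius C x * Real.sin (3 * x) / Real.cos (3 * x)) x := by
  refine (((hasDerivAt_cos_three_mul x).rpow_const (p := -(2 / 3)) (.inl hx.ne')).const_mul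
    C).congr_deriv ?_
  rw [Real.rpow_sub_one hx.ne', levelRadius]
  ring

theorem hasDerivAt_cos_div_levelRadius (hC : 0 < C) (hx : 0 < Real.cos (3 * x)) :
    HasDerivAt (fun x => Real.cos (3 * x) / (2 * levelRadius C x))
      (-(5 / 2 * Real.sin (3 * x) / levelRadius C x)) x := by
  have hR := levelRadius_pos hC hx
  refine ((hasDerivAt_cos_three_mul x).div ((hasDerivAt_levelRadius C hx).const_mul 2)
    (by positivity)).congr_deriv ?_
  field_simp
  ring

theorem levelCurve_eq (C x : ℝ) : levelCurve C x = levelRadius C x * circleMap 0 1 x ^ 2 := by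
  rw [levelCurve, circleMap_zero_pow, circleMap_zero, circleMap_zero]
  simp

theorem hasDerivAt_levelCurve (C : ℝ) (hx : 0 < Real.cos (3 * x)) :
    HasDerivAt (levelCurve C)
      (2 * I * levelRadius C x * circleMap 0 1 (-x) / Real.cos (3 * x)) x := by
  have hcos : (Real.cos (3 * x) : ℂ) ≠ 0 := mod_cast hx.ne'
  have hexp : (Real.cos (3 * x) : ℂ) - Real.sin (3 * x) * I = circleMap 0 1 (-x) ^ 3 := by
    rw [circleMap_zero_pow, circleMap_zero, one_pow, ofReal_one, one_mul, exp_ofReal_mul_I]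
    simp [sub_eq_add_neg]
  rw [funext (levelCurve_eq C)]
  refine ((hasDerivAt_levelRadius C hx).ofReal_comp.mul
    ((hasDerivAt_circleMap 0 1 x).pow 2)).congr_deriv ?_
  simp only [Pi.pow_apply, ofReal_mul, ofReal_div, ofReal_ofNat, Nat.cast_ofNat,
    Nat.add_one_sub_one, pow_one]
  field_simp
  linear_combination levelRadius C x * (circleMap 0 1 x ^ 2 * (I * hexp +
    Real.sin (3 * x) * I_sq) + I * circleMap 0 1 (-x) *
      (circleMap 0 1 x * circleMap 0 1 (-x) + 1) * circleMap_mul_circleMap_neg x)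

theorem hasDerivAt_conj_levelCurve (C : ℝ) (hx : 0 < Real.cos (3 * x)) :
    HasDerivAt (fun x => conj (levelCurve C x))
      (-(2 * I * levelRadius C x * circleMap 0 1 x / Real.cos (3 * x))) x := by
  refine (hasDerivAt_levelCurve C hx).star.congr_deriv ?_
  rw [star_def, map_div₀, map_mul, map_mul, map_mul, conj_circleMap_zero, neg_neg, conj_I,
    conj_ofReal, conj_ofReal, map_ofNat]
  ring

end LevelCurve

/-- A weighted sum of the two partial derivatives of the kernel at conjugate points of the level
curve, corrected by a multiple of the kernel so that the derivative of this function along the curve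
is a multiple of the kernel alone. -/
def conjKernelDefect (f f' g g' : ℂ → ℂ) (C x : ℝ) : ℂ :=
  circleMap 0 1 (-x) * airyKernelDeriv f f' g g' (levelCurve C x) (conj (levelCurve C x)) -
    circleMap 0 1 x * airyKernelDeriv f f' g g' (conj (levelCurve C x)) (levelCurve C x) +
    (Real.cos (3 * x) / (2 * levelRadius C x) : ℝ) *
      airyKernel f g (levelCurve C x) (conj (levelCurve C x))

theorem conjKernelDefect_zero (f f' g g' : ℂ → ℂ) (C : ℝ) : conjKernelDefect f f' g g' C 0 = 0 := by
  have hreal : conj (levelCurve C 0) = levelCurve C 0 := by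
    rw [levelCurve, conj_circleMap_zero, mul_zero, neg_zero]
  rw [conjKernelDefect, hreal, airyKernel_self]
  simp [circleMap_zero]

theorem hasDerivAt_five_halves_sin_sub_half_sin (x : ℝ) :
    HasDerivAt (fun x => 5 / 2 * Real.sin x - 1 / 2 * Real.sin (5 * x))
      (5 * Real.sin (3 * x) * Real.sin (2 * x)) x := by
  refine (((Real.hasDerivAt_sin x).const_mul (5 / 2)).sub
    ((((hasDerivAt_id x).const_mul 5).sin).const_mul (1 / 2))).congr_deriv ?_
  have hcos : Real.cos x = Real.cos (3 * x - 2 * x) := by ring_nf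
  have hcos5 : Real.cos (5 * x) = Real.cos (3 * x + 2 * x) := by ring_nf
  simp only [id]
  rw [hcos, hcos5, Real.cos_sub, Real.cos_add]
  ring

theorem sin_lt_sin_five_mul {x : ℝ} (hx : 0 < x) (hx' : x < π / 6) :
    Real.sin x < Real.sin (5 * x) := by
  have hcos : 0 < Real.cos (3 * x) := Real.cos_pos_of_mem_Ioo ⟨by linarith, by linarith⟩
  have hsin : 0 < Real.sin (2 * x) := Real.sin_pos_of_pos_of_lt_pi (by linarith) (by linarith)
  have hsum : Real.sin (5 * x) - Real.sin x = 2 * (Real.sin (2 * x) * Real.cos (3 * x)) := by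
    rw [Real.sin_sub_sin]
    ring_nf
  linarith [mul_pos hsin hcos]

namespace IsAiryBasis

variable {f f' g g' : ℂ → ℂ} {C x : ℝ}

theorem hasDerivAt_conjKernelDefect (h : IsAiryBasis f f' g g') (hC : 0 < C)
    (hx : 0 < Real.cos (3 * x)) :
    HasDerivAt (conjKernelDefect f f' g g' C)
      ((-(5 / 2 * Real.sin (3 * x) / levelRadius C x) : ℝ) *
        airyKernel f g (levelCurve C x) (conj (levelCurve C x))) x := by
  have hz := hasDerivAt_levelCurve C hx
  have hy := hasDerivAt_conj_levelCurve C hx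
  have he := hasDerivAt_circleMap 0 1 x
  have he' : HasDerivAt (fun x => circleMap 0 1 (-x)) (-(circleMap 0 1 (-x) * I)) x := by
    simpa [Function.comp_def] using (hasDerivAt_circleMap 0 1 (-x)).scomp x (hasDerivAt_neg x)
  refine (((he'.mul (h.hasDerivAt_kernelDeriv hz hy)).sub
    (he.mul (h.hasDerivAt_kernelDeriv hy hz))).add
    ((hasDerivAt_cos_div_levelRadius hC hx).ofReal_comp.mul
      (h.hasDerivAt_kernel hz hy))).congr_deriv ?_
  have hcos : (Real.cos (3 * x) : ℂ) ≠ 0 := mod_cast hx.ne'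
  have hR : (levelRadius C x : ℂ) ≠ 0 := mod_cast (levelRadius_pos hC hx).ne'
  have hzc := levelCurve_eq C x
  have hyc : conj (levelCurve C x) = levelRadius C x * circleMap 0 1 (-x) ^ 2 := by
    rw [hzc, map_mul, map_pow, conj_circleMap_zero, conj_ofReal]
  simp only [airyKernel_swap f g (conj (levelCurve C x)), airyKernel_swap f' g' (conj _)]
  rw [hyc, hzc]
  simp only [ofReal_neg, ofReal_mul, ofReal_div, ofReal_ofNat]
  generalize (Real.cos (3 * x) : ℂ) = c at hcos ⊢
  field_simp
  ring

theorem norm_conjKernelDefect_le (h : IsAiryBasis f f' g g') (hC : 0 < C) (hx : 0 ≤ x)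
    (hx' : x < π / 6) :
    ‖conjKernelDefect f f' g g' C x‖ ≤ 5 / 2 * Real.sin x - 1 / 2 * Real.sin (5 * x) := by
  have hcos {s : ℝ} (hs : s ∈ Icc 0 x) : 0 < Real.cos (3 * s) :=
    Real.cos_pos_of_mem_Ioo ⟨by linarith [hs.1, pi_pos], by linarith [hs.2]⟩
  refine image_norm_le_of_norm_deriv_right_le_deriv_boundary
    (f' := fun s => (-(5 / 2 * Real.sin (3 * s) / levelRadius C s) : ℝ) *
      airyKernel f g (levelCurve C s) (conj (levelCurve C s)))
    (fun s hs => (h.hasDerivAt_conjKernelDefect hC (hcos hs)).continuousAt.continuousWithinAt)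
    (fun s hs => (h.hasDerivAt_conjKernelDefect hC
      (hcos (Ico_subset_Icc_self hs))).hasDerivWithinAt)
    (by simp [conjKernelDefect_zero]) hasDerivAt_five_halves_sin_sub_half_sin
    (fun s hs => ?_) (right_mem_Icc.2 hx)
  have hR := levelRadius_pos hC (hcos (Ico_subset_Icc_self hs))
  have hsin : 0 ≤ Real.sin (3 * s) :=
    Real.sin_nonneg_of_nonneg_of_le_pi (by linarith [hs.1]) (by linarith [hs.2])
  have hK := h.norm_kernel_conj_circleMap_le hR.le (φ := 2 * s) (by linarith [hs.1])
    (by linarith [hs.2])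
  calc _ = 5 / 2 * Real.sin (3 * s) / levelRadius C s *
        ‖airyKernel f g (levelCurve C s) (conj (levelCurve C s))‖ := by
        rw [norm_mul, norm_real, norm_neg, Real.norm_of_nonneg (by positivity)]
    _ ≤ 5 / 2 * Real.sin (3 * s) / levelRadius C s *
        (2 * levelRadius C s * Real.sin (2 * s)) := by
        rw [levelCurve, conj_circleMap_zero]
        gcongr
    _ = 5 * Real.sin (3 * s) * Real.sin (2 * s) := by
        field_simp

theorem kernelDeriv_conj_ne_of_mem_sector (h : IsAiryBasis f f' g g') {z : ℂ} (harg : 0 < z.arg)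
    (harg' : z.arg < π / 3) (hz : airyKernel f g z (conj z) = 0) :
    airyKernelDeriv f f' g g' z (conj z) ≠ airyKernelDeriv f f' g g' (conj z) z := by
  intro hd
  set σ := z.arg / 2 with hσ
  have hcos : 0 < Real.cos (3 * σ) := Real.cos_pos_of_mem_Ioo ⟨by linarith, by linarith⟩
  have hnorm : 0 < ‖z‖ := norm_pos_iff.2 fun h0 => by simp [h0] at harg
  set C := ‖z‖ * Real.cos (3 * σ) ^ (2 / 3 : ℝ)
  have hzC : levelCurve C σ = z := by
    rw [levelCurve, levelRadius, mul_assoc, ← Real.rpow_add hcos, add_neg_cancel, Real.rpow_zero,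
      mul_one, circleMap_zero, hσ, mul_div_cancel₀ _ two_ne_zero, norm_mul_exp_arg_mul_I]
  have hunit : ‖airyKernelDeriv f f' g g' z (conj z)‖ = 1 := by
    have hprod := h.kernelDeriv_mul_swap z (conj z)
    rw [hz, zero_mul, add_zero, ← hd, ← sq] at hprod
    exact norm_eq_one_of_pow_eq_one hprod two_ne_zero
  have hsin : circleMap 0 1 (-σ) - circleMap 0 1 σ = (2 * Real.sin σ : ℝ) * -I := by
    rw [circleMap_zero, circleMap_zero, exp_ofReal_mul_I, exp_ofReal_mul_I, Real.cos_neg,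
      Real.sin_neg]
    push_cast
    ring
  have hdefect : conjKernelDefect f f' g g' C σ =
      (circleMap 0 1 (-σ) - circleMap 0 1 σ) * airyKernelDeriv f f' g g' z (conj z) := by
    rw [conjKernelDefect, hzC, hz, ← hd]
    ring
  have hle := h.norm_conjKernelDefect_le (C := C) (by positivity) (by linarith)
    (show σ < π / 6 by linarith)
  rw [hdefect, hsin, norm_mul, norm_mul, norm_neg, norm_I, norm_real, hunit, mul_one, mul_one,
    Real.norm_eq_abs] at hle
  linarith [sin_lt_sin_five_mul (show 0 < σ by linarith) (by linarith),
    le_abs_self (2 * Real.sin σ)]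

end IsAiryBasis

section Picone

theorem eq_zero_of_hasDerivAt_nonneg {T T' : ℝ → ℝ} {a b : ℝ} (hc : ContinuousOn T (Icc a b))
    (hT : ∀ t ∈ Ioo a b, HasDerivAt T (T' t) t) (hT' : ∀ t ∈ Ioo a b, 0 ≤ T' t) (hab : T b ≤ T a)
    {t : ℝ} (ht : t ∈ Ioo a b) : T' t = 0 := by
  have hmono : MonotoneOn T (Icc a b) := by
    refine monotoneOn_of_deriv_nonneg (convex_Icc a b) hc ?_ ?_ <;> rw [interior_Icc]
    · exact fun t ht => (hT t ht).differentiableAt.differentiableWithinAt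
    · exact fun t ht => (hT t ht).deriv ▸ hT' t ht
  have hle : a ≤ b := (ht.1.trans ht.2).le
  refine (hT t ht).unique ((hasDerivAt_const t (T a)).congr_of_eventuallyEq ?_)
  filter_upwards [Icc_mem_nhds ht.1 ht.2] with s hs
  exact le_antisymm ((hmono hs (right_mem_Icc.2 hle) hs.2).trans hab)
    (hmono (left_mem_Icc.2 hle) hs hs.1)

variable {d d₁ ρ ρ₁ p h W W' : ℝ → ℝ} {a b t : ℝ}

theorem hasDerivAt_picone (hd : HasDerivAt d (d₁ t) t)
    (hd₁ : HasDerivAt d₁ (-(p t * d t) - h t) t) (hρ : HasDerivAt ρ (ρ₁ t) t)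
    (hρ₁ : HasDerivAt ρ₁ (-(p t * ρ t)) t) (h0 : ρ t ≠ 0) :
    HasDerivAt (fun t => d t * d₁ t - d t * (d t / ρ t) * ρ₁ t)
      ((d₁ t - d t / ρ t * ρ₁ t) ^ 2 - d t * h t) t := by
  refine ((hd.mul hd₁).sub ((hd.mul (hd.div hρ h0)).mul hρ₁)).congr_deriv ?_
  simp only [Pi.mul_apply, Pi.div_apply]
  field_simp
  ring

theorem continuousOn_picone (hd : ∀ t, HasDerivAt d (d₁ t) t) (hd₁ : Continuous d₁)
    (hρ : ∀ t, HasDerivAt ρ (ρ₁ t) t) (hρ₁ : Continuous ρ₁) (hda : d a = 0) (hρa : ρ a = 0)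
    (hρ₁a : ρ₁ a ≠ 0) (hρ0 : ∀ t ∈ Ioc a b, ρ t ≠ 0) :
    ContinuousOn (fun t => d t * d₁ t - d t * (d t / ρ t) * ρ₁ t) (Icc a b) := by
  have hdc : Continuous d := continuous_iff_continuousAt.2 fun t => (hd t).continuousAt
  have hρc : Continuous ρ := continuous_iff_continuousAt.2 fun t => (hρ t).continuousAt
  have hlim {k : ℝ → ℝ} (hk : Continuous k) : Tendsto k (𝓝[>] a) (𝓝 (k a)) :=
    hk.continuousWithinAt
  intro t ht
  rcases ht.1.eq_or_lt with rfl | hta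
  · have hquot : Tendsto (fun t => d t / ρ t) (𝓝[>] a) (𝓝 (d₁ a / ρ₁ a)) :=
      HasDerivAt.lhopital_zero_nhdsGT (.of_forall hd) (.of_forall hρ)
        ((hlim hρ₁).eventually_ne hρ₁a) (hda ▸ hlim hdc) (hρa ▸ hlim hρc)
        ((hlim hd₁).div (hlim hρ₁) hρ₁a)
    refine (continuousWithinAt_Ioi_iff_Ici.1 ?_).mono Icc_subset_Ici_self
    have := ((hlim hdc).mul (hlim hd₁)).sub (((hlim hdc).mul hquot).mul (hlim hρ₁))
    simpa only [ContinuousWithinAt, hda, zero_mul, sub_zero] using this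
  · have h0 := hρ0 t ⟨hta, ht.2⟩
    exact ContinuousAt.continuousWithinAt (by fun_prop (disch := assumption))

/-- Picone's identity: the function in `hasDerivAt_picone` plus `W` is nondecreasing and has the
same value at both ends, so `d / ρ` is constant. -/
theorem eq_zero_of_picone (hd : ∀ t, HasDerivAt d (d₁ t) t)
    (hd₁ : ∀ t, HasDerivAt d₁ (-(p t * d t) - h t) t) (hρ : ∀ t, HasDerivAt ρ (ρ₁ t) t)
    (hρ₁ : ∀ t, HasDerivAt ρ₁ (-(p t * ρ t)) t) (hW : ∀ t, HasDerivAt W (W' t) t)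
    (hda : d a = 0) (hdb : d b = 0) (hρa : ρ a = 0) (hρ₁a : ρ₁ a ≠ 0)
    (hρ0 : ∀ t ∈ Ioc a b, ρ t ≠ 0) (hWh : ∀ t, d t * h t ≤ W' t) (hWab : W b ≤ W a)
    (ht : t ∈ Ioo a b) : d t = 0 := by
  have hcont {k k' : ℝ → ℝ} (hk : ∀ t, HasDerivAt k (k' t) t) : Continuous k :=
    continuous_iff_continuousAt.2 fun t => (hk t).continuousAt
  have hratio {s : ℝ} (hs : s ∈ Ioo a b) : d₁ s - d s / ρ s * ρ₁ s = 0 := by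
    have hsum : (d₁ s - d s / ρ s * ρ₁ s) ^ 2 - d s * h s + W' s = 0 :=
      eq_zero_of_hasDerivAt_nonneg
        (T := fun t => d t * d₁ t - d t * (d t / ρ t) * ρ₁ t + W t)
        (T' := fun t => (d₁ t - d t / ρ t * ρ₁ t) ^ 2 - d t * h t + W' t)
        ((continuousOn_picone hd (hcont hd₁) hρ (hcont hρ₁) hda hρa hρ₁a hρ0).add
          (hcont hW).continuousOn)
        (fun t ht => (hasDerivAt_picone (hd t) (hd₁ t) (hρ t) (hρ₁ t)
          (hρ0 t (Ioo_subset_Ioc_self ht))).add (hW t))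
        (fun t _ => by linarith [sq_nonneg (d₁ t - d t / ρ t * ρ₁ t), hWh t])
        (by simpa [hda, hdb] using hWab) hs
    have := hWh s
    exact pow_eq_zero_iff two_ne_zero |>.1 (le_antisymm (by linarith) (sq_nonneg _))
  have hquot {s : ℝ} (hs : s ∈ Ioc a b) :
      HasDerivAt (fun t => d t / ρ t) ((d₁ s - d s / ρ s * ρ₁ s) / ρ s) s := by
    have h0 := hρ0 s hs
    refine ((hd s).div (hρ s) h0).congr_deriv ?_
    field_simp
  have hzero : d b / ρ b = d t / ρ t :=
    constant_of_has_deriv_right_zero (f := fun t => d t / ρ t)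
      (fun s hs => (hquot ⟨ht.1.trans_le hs.1, hs.2⟩).continuousAt.continuousWithinAt)
      (fun s hs => by
        have hs' : s ∈ Ioo a b := ⟨ht.1.trans_le hs.1, hs.2⟩
        simpa only [hratio hs', zero_div] using
          (hquot (Ioo_subset_Ioc_self hs')).hasDerivWithinAt) b (right_mem_Icc.2 ht.2.le)
  rw [hdb, zero_div, eq_comm, div_eq_zero_iff] at hzero
  exact hzero.resolve_right (hρ0 t (Ioo_subset_Ioc_self ht))

end Picone

/-- The primitive sixth root of unity `exp (π i / 3)`, the direction of the ray `arg z = π / 3`. -/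
def sixthRoot : ℂ := exp ((π / 3 : ℝ) * I)

theorem sixthRoot_re : sixthRoot.re = 1 / 2 := by
  rw [sixthRoot, exp_ofReal_mul_I_re, Real.cos_pi_div_three]

theorem sixthRoot_im : sixthRoot.im = √3 / 2 := by
  rw [sixthRoot, exp_ofReal_mul_I_im, Real.sin_pi_div_three]

theorem sixthRoot_sq : sixthRoot ^ 2 = sixthRoot - 1 := by
  have h3 : √3 * √3 = 3 := Real.mul_self_sqrt zero_le_three
  apply Complex.ext <;> simp only [sq, mul_re, mul_im, sub_re, sub_im, one_re, one_im,
    sixthRoot_re, sixthRoot_im] <;> linarith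

theorem conj_sixthRoot : conj sixthRoot = 1 - sixthRoot := by
  apply Complex.ext <;> simp only [conj_re, conj_im, sub_re, sub_im, one_re, one_im,
    sixthRoot_re, sixthRoot_im] <;> norm_num

theorem sixthRoot_ne_zero : sixthRoot ≠ 0 := exp_ne_zero _

theorem hasDerivAt_re {k : ℝ → ℂ} {k' : ℂ} {t : ℝ} (hk : HasDerivAt k k' t) :
    HasDerivAt (fun t => (k t).re) k'.re t :=
  reCLM.hasFDerivAt.comp_hasDerivAt _ hk

theorem hasDerivAt_im {k : ℝ → ℂ} {k' : ℂ} {t : ℝ} (hk : HasDerivAt k k' t) :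
    HasDerivAt (fun t => (k t).im) k'.im t :=
  imCLM.hasFDerivAt.comp_hasDerivAt _ hk

theorem hasDerivAt_add_ofReal_mul (a e : ℂ) (t : ℝ) :
    HasDerivAt (fun t : ℝ => a + t * e) e t := by
  simpa using (((hasDerivAt_id (t : ℂ)).mul_const e).const_add a).comp_ofReal

namespace IsAirySolution

variable {w w' : ℂ → ℂ}

theorem hasDerivAt_line (hw : IsAirySolution w w') (a e : ℂ) (t : ℝ) :
    HasDerivAt (fun t : ℝ => w (a + t * e)) (w' (a + t * e) * e) t :=
  (hw.hasDerivAt _).comp t (hasDerivAt_add_ofReal_mul a e t)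

theorem hasDerivAt_deriv_line (hw : IsAirySolution w w') (a e : ℂ) (t : ℝ) :
    HasDerivAt (fun t : ℝ => w' (a + t * e)) ((a + t * e) * w (a + t * e) * e) t :=
  (hw.hasDerivAt_deriv _).comp t (hasDerivAt_add_ofReal_mul a e t)

theorem hasDerivAt_energy (hw : IsAirySolution w w') (z : ℂ) :
    HasDerivAt (fun z => z * w z ^ 2 - w' z ^ 2) (w z ^ 2) z := by
  refine (((hasDerivAt_id z).mul ((hw.hasDerivAt z).pow 2)).sub
    ((hw.hasDerivAt_deriv z).pow 2)).congr_deriv ?_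
  simp only [id, Pi.pow_apply]
  push_cast
  ring

theorem hasDerivAt_im_energy_line (hw : IsAirySolution w w') (a e : ℂ) (t : ℝ) :
    HasDerivAt (fun t : ℝ => ((a + t * e) * w (a + t * e) ^ 2 - w' (a + t * e) ^ 2).im)
      (w (a + t * e) ^ 2 * e).im t :=
  hasDerivAt_im ((hw.hasDerivAt_energy _).comp t (hasDerivAt_add_ofReal_mul a e t))

theorem im_deriv_ofReal (hw : IsAirySolution w w') (hreal : ∀ x : ℝ, (w x).im = 0) (x : ℝ) :
    (w' x).im = 0 := by
  have hderiv := hasDerivAt_im (hw.hasDerivAt x).comp_ofReal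
  rw [funext hreal] at hderiv
  exact hderiv.unique (hasDerivAt_const x 0)

/-- On the ray the imaginary part of the solution satisfies `d'' = -t d - a κ`, where
`κ = d / 2 - √3 / 2 * s` and `s` is the real part, while the energy `Ω` has `Ω' = im (w² e)`. As
`-√3 / 4 * a * Ω' - a d κ = -a / 2 * κ²`, the sign of `a` makes Picone's identity applicable. -/
theorem im_eq_zero_of_mem_ray (hw : IsAirySolution w w') (hreal : ∀ x : ℝ, (w x).im = 0)
    {ρ ρ₁ : ℝ → ℝ} (hρ : ∀ t, HasDerivAt ρ (ρ₁ t) t) (hρ₁ : ∀ t, HasDerivAt ρ₁ (-(t * ρ t)) t)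
    (hρ_zero : ρ 0 = 0) (hρ₁_zero : ρ₁ 0 ≠ 0) {a r : ℝ} (hρ_ne : ∀ t ∈ Ioc 0 r, ρ t ≠ 0)
    (ha : a ≤ 0) (hr : w (a + r * sixthRoot) = 0) (hr' : (w' (a + r * sixthRoot) ^ 2).im = 0)
    {t : ℝ} (ht : t ∈ Ioo 0 r) : (w (a + t * sixthRoot)).im = 0 := by
  have h3 : √3 * √3 = 3 := Real.mul_self_sqrt zero_le_three
  set e := sixthRoot
  have hd₁ (t : ℝ) : HasDerivAt (fun t : ℝ => (w' (a + t * e) * e).im)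
      (-(t * (w (a + t * e)).im) -
        a * (1 / 2 * (w (a + t * e)).im - √3 / 2 * (w (a + t * e)).re)) t := by
    refine (hasDerivAt_im ((hw.hasDerivAt_deriv_line a e t).mul_const e)).congr_deriv ?_
    have hsq : (a + t * e) * w (a + t * e) * e * e = (a * (e - 1) - t) * w (a + t * e) := by
      linear_combination ((a : ℂ) + t * (e + 1)) * w (a + t * e) * sixthRoot_sq
    rw [hsq]
    simp [e, sixthRoot_re, sixthRoot_im]
    ring
  have hWh (t : ℝ) : (w (a + t * e)).im *
      (a * (1 / 2 * (w (a + t * e)).im - √3 / 2 * (w (a + t * e)).re)) ≤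
      -(√3 / 4 * a) * (w (a + t * e) ^ 2 * e).im := by
    simp only [sq, mul_im, mul_re, e, sixthRoot_re, sixthRoot_im]
    generalize (w (a + t * sixthRoot)).im = d
    generalize (w (a + t * sixthRoot)).re = s
    have hκ : 0 ≤ -a / 2 * (1 / 2 * d - √3 / 2 * s) ^ 2 :=
      mul_nonneg (by linarith) (sq_nonneg _)
    linear_combination hκ - a / 8 * d ^ 2 * h3
  have hΩ0 : (w a ^ 2).im = 0 ∧ (w' a ^ 2).im = 0 := by
    simp [sq, hreal, hw.im_deriv_ofReal hreal]
  exact eq_zero_of_picone (fun t => hasDerivAt_im (hw.hasDerivAt_line a e t)) hd₁ hρ hρ₁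
    (fun t => (hw.hasDerivAt_im_energy_line a e t).const_mul (-(√3 / 4 * a)))
    (by simp [hreal]) (by simp [hr]) hρ_zero hρ₁_zero hρ_ne hWh
    (by simp [hr, hr', hΩ0.1, hΩ0.2]) ht

theorem eq_zero_of_im_eq_zero_on_ray (hw : IsAirySolution w w') (hreal : ∀ x : ℝ, (w x).im = 0)
    {a r : ℝ} (hr : w (a + r * sixthRoot) = 0) (hr' : (w' (a + r * sixthRoot) ^ 2).im = 0)
    (him : ∀ t ∈ Ioo 0 r, (w (a + t * sixthRoot)).im = 0) {t : ℝ} (ht : t ∈ Ioo 0 r) :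
    w (a + t * sixthRoot) = 0 := by
  set e := sixthRoot
  have hsquare {t : ℝ} (ht : t ∈ Ioo 0 r) :
      (w (a + t * e) ^ 2 * e).im = √3 / 2 * (w (a + t * e)).re ^ 2 := by
    simp only [sq, mul_im, mul_re, e, sixthRoot_re, sixthRoot_im, him t ht]
    ring
  have hΩ0 : (w a ^ 2).im = 0 ∧ (w' a ^ 2).im = 0 := by
    simp [sq, hreal, hw.im_deriv_ofReal hreal]
  have hzero := eq_zero_of_hasDerivAt_nonneg
    (fun t _ => (hw.hasDerivAt_im_energy_line a e t).continuousAt.continuousWithinAt)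
    (fun t _ => hw.hasDerivAt_im_energy_line a e t)
    (fun t ht => by rw [hsquare ht]; positivity) (by simp [hr, hr', hΩ0.1, hΩ0.2]) ht
  rw [hsquare ht] at hzero
  exact Complex.ext (by simpa using hzero) (him t ht)

end IsAirySolution

namespace IsAiryBasis

variable {f f' g g' : ℂ → ℂ}

/-- As `t e = e² * conj (t e)`, the symmetries of `f` give `f (t e) = e² * conj (f (t e))`. -/
theorem left_mul_sixthRoot (h : IsAiryBasis f f' g g') (t : ℝ) :
    f (t * sixthRoot) = (f (t * sixthRoot) * conj sixthRoot).re * sixthRoot := by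
  set e := sixthRoot
  have hsq : e ^ 2 = e - 1 := sixthRoot_sq
  have hconj : conj e = 1 - e := conj_sixthRoot
  have hray : f (t * e) = e ^ 2 * conj (f (t * e)) := by
    rw [← h.left_conj, ← h.left_mul (by linear_combination (e ^ 4 + e ^ 3 - e - 1) * hsq), map_mul,
      conj_ofReal, hconj]
    congr 1
    linear_combination t * e * hsq
  rw [conj_eq_iff_re.1, hconj]
  · linear_combination f (t * e) * hsq
  · rw [map_mul, Complex.conj_conj, hconj]
    linear_combination conj (f (t * e)) * e * hsq + (e - 1) * hray

theorem kernelDeriv_conj_ne_of_left_ray_ne_zero (h : IsAiryBasis f f' g g') {a r : ℝ} (ha : a ≤ 0)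
    (hr : 0 < r) (hray : ∀ t ∈ Ioc 0 r, f (t * sixthRoot) ≠ 0)
    (hz : airyKernel f g (a + r * sixthRoot) (conj (a + r * sixthRoot)) = 0) :
    airyKernelDeriv f f' g g' (a + r * sixthRoot) (conj (a + r * sixthRoot)) ≠
      airyKernelDeriv f f' g g' (conj (a + r * sixthRoot)) (a + r * sixthRoot) := by
  intro hd
  obtain ⟨w, w', hw, hreal, hwz, hwz', hsq⟩ := h.exists_solution_real_of_kernelDeriv_eq hz hd
  set e := sixthRoot
  have hρ (t : ℝ) : HasDerivAt (fun t : ℝ => (f (t * e) * conj e).re) (f' (t * e)).re t := by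
    have := h.left.hasDerivAt_line 0 e t
    simp only [zero_add] at this
    refine (hasDerivAt_re (this.mul_const (conj e))).congr_deriv ?_
    rw [conj_sixthRoot]
    congr 1
    linear_combination -f' (t * e) * sixthRoot_sq
  have hρ₁ (t : ℝ) : HasDerivAt (fun t : ℝ => (f' (t * e)).re)
      (-(t * (f (t * e) * conj e).re)) t := by
    have := h.left.hasDerivAt_deriv_line 0 e t
    simp only [zero_add] at this
    refine (hasDerivAt_re this).congr_deriv ?_
    rw [← re_ofReal_mul, ← neg_re, conj_sixthRoot]
    congr 1
    linear_combination t * f (t * e) * sixthRoot_sq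
  have hρ_ne (t : ℝ) (ht : t ∈ Ioc 0 r) : (f (t * e) * conj e).re ≠ 0 := fun h0 =>
    hray t ht (by rw [h.left_mul_sixthRoot, h0, ofReal_zero, zero_mul])
  have him (t : ℝ) (ht : t ∈ Ioo 0 r) : (w (a + t * e)).im = 0 :=
    hw.im_eq_zero_of_mem_ray hreal hρ hρ₁ (by simp [h.left_zero]) (by simp [h.left_deriv_zero])
      hρ_ne ha hwz hsq ht
  have hvanish {t : ℝ} (ht : t ∈ Ioo 0 r) : w (a + t * e) = 0 :=
    hw.eq_zero_of_im_eq_zero_on_ray hreal hwz hsq him ht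
  have hmid : r / 2 ∈ Ioo 0 r := ⟨half_pos hr, half_lt_self hr⟩
  have hvanish' : w' (a + (r / 2 : ℝ) * e) * e = 0 := by
    refine (hw.hasDerivAt_line a e (r / 2)).unique
      ((hasDerivAt_const (r / 2) 0).congr_of_eventuallyEq ?_)
    filter_upwards [Ioo_mem_nhds hmid.1 hmid.2] with t ht using hvanish ht
  refine hwz' ?_
  rw [h.deriv_eq_kernel hw _ (a + (r / 2 : ℝ) * e), hvanish hmid,
    (mul_eq_zero.1 hvanish').resolve_right sixthRoot_ne_zero]
  ring

end IsAiryBasis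

section SquareIntegral

/-- The squared `L²` norm on the interval `[-1, 1]`. -/
def sqIntegral (u : ℝ → ℂ) : ℝ := ∫ x in (-1 : ℝ)..1, ‖u x‖ ^ 2

variable {u v : ℝ → ℂ}

theorem sqIntegral_nonneg (u : ℝ → ℂ) : 0 ≤ sqIntegral u :=
  intervalIntegral.integral_nonneg (by norm_num) fun _ _ => by positivity

theorem sqIntegral_pos (hu : Continuous u) {x : ℝ} (hx : x ∈ Icc (-1) 1) (hux : u x ≠ 0) :
    0 < sqIntegral u :=
  intervalIntegral.integral_pos (by norm_num) (by fun_prop) (fun _ _ => by positivity)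
    ⟨x, hx, by positivity⟩

theorem sqIntegral_conj_comp_neg (u : ℝ → ℂ) :
    sqIntegral (fun x => conj (u (-x))) = sqIntegral u := by
  simpa [sqIntegral] using
    intervalIntegral.integral_comp_neg (a := -1) (b := 1) fun x => ‖u x‖ ^ 2

/-- The discriminant of `c ↦ ∫ (c ‖u‖ + ‖v‖)²` is nonpositive. -/
theorem integral_norm_mul_norm_le (hu : Continuous u) (hv : Continuous v) :
    ∫ x in (-1 : ℝ)..1, ‖u x‖ * ‖v x‖ ≤ √(sqIntegral u * sqIntegral v) := by
  set J := ∫ x in (-1 : ℝ)..1, ‖u x‖ * ‖v x‖ with hJ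
  refine Real.le_sqrt_of_sq_le ?_
  have hquad (c : ℝ) : 0 ≤ sqIntegral u * (c * c) + 2 * J * c + sqIntegral v := by
    have hsum : sqIntegral u * (c * c) + 2 * J * c + sqIntegral v =
        ∫ x in (-1 : ℝ)..1, (‖u x‖ ^ 2 * (c * c) + ‖u x‖ * ‖v x‖ * (2 * c) + ‖v x‖ ^ 2) := by
      rw [intervalIntegral.integral_add, intervalIntegral.integral_add,
        intervalIntegral.integral_mul_const, intervalIntegral.integral_mul_const, ← hJ]
      · rw [sqIntegral, sqIntegral]
        ring
      all_goals exact Continuous.intervalIntegrable (by fun_prop) _ _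
    rw [hsum]
    refine intervalIntegral.integral_nonneg (by norm_num) fun x _ => ?_
    linear_combination sq_nonneg (c * ‖u x‖ + ‖v x‖)
  have hdiscrim := discrim_le_zero hquad
  rw [discrim] at hdiscrim
  linarith

theorem integral_norm_mul_norm_le_mul_sqIntegral (hu : Continuous u) (hv : Continuous v) {K : ℝ}
    (hK : sqIntegral v = K * sqIntegral u) :
    ∫ x in (-1 : ℝ)..1, ‖u x‖ * ‖v x‖ ≤ √K * sqIntegral u := by
  refine (integral_norm_mul_norm_le hu hv).trans_eq ?_
  rw [hK, mul_left_comm, Real.sqrt_mul' _ (mul_self_nonneg _),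
    Real.sqrt_mul_self (sqIntegral_nonneg u)]

end SquareIntegral

theorem neg_mul_norm_mul_norm_le_mul_inner {c M : ℝ} (hc : |c| ≤ M) (a b : ℂ) :
    -(M * (‖a‖ * ‖b‖)) ≤ c * inner ℝ a b := by
  refine neg_le_of_abs_le ?_
  rw [abs_mul]
  exact mul_le_mul hc (abs_real_inner_le_norm a b) (abs_nonneg _) ((abs_nonneg c).trans hc)

/-- Squaring reduces this to `(‖p‖² + ‖q‖²)² = ‖p² - q²‖² + (2 re (p conj q))²`. -/
theorem sq_norm_add_sq_norm_le (p q : ℂ) :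
    ‖p‖ ^ 2 + ‖q‖ ^ 2 ≤ ‖p ^ 2 - q ^ 2‖ + ‖p * conj q + q * conj p‖ := by
  refine le_of_sq_le_sq ?_ (by positivity)
  have hsq : (‖p‖ ^ 2 + ‖q‖ ^ 2) ^ 2 = ‖p ^ 2 - q ^ 2‖ ^ 2 + ‖p * conj q + q * conj p‖ ^ 2 := by
    simp only [Complex.sq_norm, normSq_apply]
    simp [sq]
    ring
  rw [hsq, add_sq']
  exact le_add_of_nonneg_right (by positivity)

/-- `y` is an eigenfunction of the Dirichlet problem `-y'' - i ε x y = κ y`, `y (-1) = y 1 = 0`,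
with eigenvalue `κ` and derivative `y'`. -/
structure IsDirichletEigenfunction (ε : ℝ) (κ : ℂ) (y y' : ℝ → ℂ) : Prop where
  hasDerivAt (x : ℝ) : HasDerivAt y (y' x) x
  hasDerivAt_deriv (x : ℝ) : HasDerivAt y' (-(κ + I * ε * x) * y x) x
  left_boundary : y (-1) = 0
  right_boundary : y 1 = 0
  exists_ne_zero : ∃ x ∈ Icc (-1 : ℝ) 1, y x ≠ 0

namespace IsDirichletEigenfunction

variable {ε : ℝ} {κ ν : ℂ} {y y' v v' : ℝ → ℂ}

theorem continuous (h : IsDirichletEigenfunction ε κ y y') : Continuous y :=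
  continuous_iff_continuousAt.2 fun x => (h.hasDerivAt x).continuousAt

theorem continuous_deriv (h : IsDirichletEigenfunction ε κ y y') : Continuous y' :=
  continuous_iff_continuousAt.2 fun x => (h.hasDerivAt_deriv x).continuousAt

theorem sqIntegral_pos (h : IsDirichletEigenfunction ε κ y y') : 0 < sqIntegral y :=
  let ⟨_, hx, hyx⟩ := h.exists_ne_zero
  _root_.sqIntegral_pos h.continuous hx hyx

theorem reflect (h : IsDirichletEigenfunction ε κ y y') :
    IsDirichletEigenfunction ε (conj κ) (fun x => conj (y (-x))) (fun x => -conj (y' (-x))) where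
  hasDerivAt x := by
    simpa [Function.comp_def] using ((h.hasDerivAt (-x)).scomp x (hasDerivAt_neg x)).star
  hasDerivAt_deriv x := by
    refine ((h.hasDerivAt_deriv (-x)).scomp x (hasDerivAt_neg x)).star.neg.congr_deriv ?_
    simp
  left_boundary := by simp [h.right_boundary]
  right_boundary := by simp [h.left_boundary]
  exists_ne_zero :=
    let ⟨x, hx, hyx⟩ := h.exists_ne_zero
    ⟨-x, ⟨neg_le_neg hx.2, neg_le.1 hx.1⟩, by simpa using hyx⟩

theorem hasDerivAt_deriv_mul_conj (h : IsDirichletEigenfunction ε κ y y') (x : ℝ) :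
    HasDerivAt (fun x => y' x * conj (y x))
      ((‖y' x‖ ^ 2 : ℝ) - (κ + I * ε * x) * (‖y x‖ ^ 2 : ℝ)) x := by
  refine ((h.hasDerivAt_deriv x).mul (h.hasDerivAt x).star).congr_deriv ?_
  rw [star_def, ofReal_pow, ofReal_pow, ← mul_conj', ← mul_conj']
  ring

theorem sqIntegral_deriv (h : IsDirichletEigenfunction ε κ y y') :
    sqIntegral y' = κ.re * sqIntegral y := by
  have := h.continuous
  have := h.continuous_deriv
  have hzero : ∫ x in (-1 : ℝ)..1, (‖y' x‖ ^ 2 - κ.re * ‖y x‖ ^ 2) = 0 := by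
    rw [intervalIntegral.integral_eq_sub_of_hasDerivAt (f := fun x => (y' x * conj (y x)).re)
      (fun x _ => ?_) (Continuous.intervalIntegrable (by fun_prop) _ _)]
    · simp [h.left_boundary, h.right_boundary]
    · exact (hasDerivAt_re (h.hasDerivAt_deriv_mul_conj x)).congr_deriv (by simp [-ofReal_pow])
  rw [intervalIntegral.integral_sub, intervalIntegral.integral_const_mul] at hzero
  · exact sub_eq_zero.1 hzero
  all_goals exact Continuous.intervalIntegrable (by fun_prop) _ _

theorem integral_im_mul_sq_norm (h : IsDirichletEigenfunction ε κ y y') :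
    ∫ x in (-1 : ℝ)..1, (κ.im + ε * x) * ‖y x‖ ^ 2 = 0 := by
  have := h.continuous
  rw [intervalIntegral.integral_eq_sub_of_hasDerivAt (f := fun x => -(y' x * conj (y x)).im)
    (fun x _ => ?_) (Continuous.intervalIntegrable (by fun_prop) _ _)]
  · simp [h.left_boundary, h.right_boundary]
  · exact (hasDerivAt_im (h.hasDerivAt_deriv_mul_conj x)).neg.congr_deriv (by simp [-ofReal_pow])

theorem abs_im_le (h : IsDirichletEigenfunction ε κ y y') (hε : 0 ≤ ε) : |κ.im| ≤ ε := by
  have := h.continuous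
  have hint (a b : ℝ) : IntervalIntegrable (fun x => (a + b * x) * ‖y x‖ ^ 2) volume (-1) 1 :=
    Continuous.intervalIntegrable (by fun_prop) _ _
  have hlower : (κ.im - ε) * sqIntegral y ≤ 0 := by
    rw [← h.integral_im_mul_sq_norm, sqIntegral, ← intervalIntegral.integral_const_mul]
    refine intervalIntegral.integral_mono_on (by norm_num) (by simpa using hint (κ.im - ε) 0)
      (hint _ _) fun x hx => ?_
    gcongr
    nlinarith [hx.1]
  have hupper : 0 ≤ (κ.im + ε) * sqIntegral y := by
    rw [← h.integral_im_mul_sq_norm, sqIntegral, ← intervalIntegral.integral_const_mul]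
    refine intervalIntegral.integral_mono_on (by norm_num) (hint _ _)
      (by simpa using hint (κ.im + ε) 0) fun x hx => ?_
    gcongr
    nlinarith [hx.2]
  rw [abs_le]
  constructor <;> nlinarith [h.sqIntegral_pos]

theorem integral_norm_mul_norm_deriv_le (h : IsDirichletEigenfunction ε κ y y') :
    ∫ x in (-1 : ℝ)..1, ‖y x‖ * ‖y' x‖ ≤ √κ.re * sqIntegral y :=
  integral_norm_mul_norm_le_mul_sqIntegral h.continuous h.continuous_deriv h.sqIntegral_deriv

theorem one_half_le_sqrt_re (h : IsDirichletEigenfunction ε κ y y') : 1 / 2 ≤ √κ.re := by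
  have := h.continuous
  have := h.continuous_deriv
  have hint : ∫ x in (-1 : ℝ)..1, (‖y x‖ ^ 2 - 2 * (‖y x‖ * ‖y' x‖)) ≤
      1 * ‖y 1‖ ^ 2 - (-1) * ‖y (-1)‖ ^ 2 := by
    have hderiv (x : ℝ) := (hasDerivAt_id x).mul (h.hasDerivAt x).norm_sq
    refine intervalIntegral.integral_le_sub_of_hasDeriv_right_of_le (by norm_num)
      (fun x _ => (hderiv x).continuousAt.continuousWithinAt)
      (fun x _ => (hderiv x).hasDerivWithinAt)
      (Continuous.integrableOn_Icc (by fun_prop)) fun x hx => ?_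
    simp only [id]
    linarith [neg_mul_norm_mul_norm_le_mul_inner (abs_le.2 ⟨hx.1.le, hx.2.le⟩) (y x) (y' x)]
  rw [intervalIntegral.integral_sub, intervalIntegral.integral_const_mul, h.left_boundary,
    h.right_boundary, norm_zero] at hint
  · change sqIntegral y - _ ≤ _ at hint
    have := h.integral_norm_mul_norm_deriv_le
    nlinarith [h.sqIntegral_pos]
  all_goals exact Continuous.intervalIntegrable (by fun_prop) _ _

/-- Rellich's identity, obtained with the multiplier `x y'`. -/
theorem le_sq_norm_deriv_add_sq_norm_deriv (h : IsDirichletEigenfunction ε κ y y') (hε : 0 ≤ ε) :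
    2 * κ.re * sqIntegral y - 4 * ε * (√κ.re * sqIntegral y) ≤ ‖y' 1‖ ^ 2 + ‖y' (-1)‖ ^ 2 := by
  have := h.continuous
  have := h.continuous_deriv
  have hint : ∫ x in (-1 : ℝ)..1, (‖y' x‖ ^ 2 + κ.re * ‖y x‖ ^ 2 - 4 * ε * (‖y x‖ * ‖y' x‖)) ≤
      1 * (‖y' 1‖ ^ 2 + κ.re * ‖y 1‖ ^ 2) - (-1) * (‖y' (-1)‖ ^ 2 + κ.re * ‖y (-1)‖ ^ 2) := by
    have hderiv (x : ℝ) := (hasDerivAt_id x).mul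
      ((h.hasDerivAt_deriv x).norm_sq.add ((h.hasDerivAt x).norm_sq.const_mul κ.re))
    refine intervalIntegral.integral_le_sub_of_hasDeriv_right_of_le (by norm_num)
      (fun x _ => (hderiv x).continuousAt.continuousWithinAt)
      (fun x _ => (hderiv x).hasDerivWithinAt)
      (Continuous.integrableOn_Icc (by fun_prop)) fun x hx => ?_
    have hc : |x * (κ.im + ε * x)| ≤ 2 * ε := by
      have hx1 : |x| ≤ 1 := abs_le.2 ⟨hx.1.le, hx.2.le⟩
      have hpot : |κ.im + ε * x| ≤ 2 * ε := by
        rw [two_mul]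
        refine (abs_add_le _ _).trans (add_le_add (h.abs_im_le hε) ?_)
        rw [abs_mul, abs_of_nonneg hε]
        exact mul_le_of_le_one_right hε hx1
      rw [abs_mul]
      exact (mul_le_of_le_one_left (abs_nonneg _) hx1).trans hpot
    have hinner : inner ℝ (y' x) (-(κ + I * ε * x) * y x) =
        -κ.re * inner ℝ (y x) (y' x) + (κ.im + ε * x) * inner ℝ (y x * -I) (y' x) := by
      simp [Complex.inner]
      ring
    have hbound := neg_mul_norm_mul_norm_le_mul_inner hc (y x * -I) (y' x)
    rw [norm_mul, norm_neg, norm_I, mul_one] at hbound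
    simp only [id, Pi.add_apply, hinner]
    linarith
  rw [intervalIntegral.integral_sub, intervalIntegral.integral_add,
    intervalIntegral.integral_const_mul, intervalIntegral.integral_const_mul, h.left_boundary,
    h.right_boundary, norm_zero] at hint
  · change sqIntegral y' + κ.re * sqIntegral y - _ ≤ _ at hint
    rw [h.sqIntegral_deriv] at hint
    nlinarith [h.integral_norm_mul_norm_deriv_le]
  all_goals exact Continuous.intervalIntegrable (by fun_prop) _ _

theorem norm_sq_deriv_sub_sq_deriv_le (h : IsDirichletEigenfunction ε κ y y') (hε : 0 ≤ ε) :
    ‖y' 1 ^ 2 - y' (-1) ^ 2‖ ≤ ε * sqIntegral y := by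
  have := h.continuous
  have hint : ∫ x in (-1 : ℝ)..1, I * ε * y x ^ 2 = y' 1 ^ 2 - y' (-1) ^ 2 := by
    rw [intervalIntegral.integral_eq_sub_of_hasDerivAt
      (f := fun x => y' x ^ 2 + (κ + x * (I * ε)) * y x ^ 2)
      (fun x _ => ?_) (Continuous.intervalIntegrable (by fun_prop) _ _)]
    · simp [h.left_boundary, h.right_boundary]
    · refine (((h.hasDerivAt_deriv x).pow 2).add ((hasDerivAt_add_ofReal_mul κ (I * ε) x).mul
        ((h.hasDerivAt x).pow 2))).congr_deriv ?_
      simp only [Pi.pow_apply]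
      push_cast
      ring
  rw [← hint, sqIntegral, ← intervalIntegral.integral_const_mul]
  refine (intervalIntegral.norm_integral_le_integral_norm (by norm_num)).trans_eq ?_
  simp [abs_of_nonneg hε]

theorem integral_mul_eq_zero (h : IsDirichletEigenfunction ε κ y y')
    (hv : IsDirichletEigenfunction ε ν v v') (hne : κ ≠ ν) :
    ∫ x in (-1 : ℝ)..1, y x * v x = 0 := by
  have := h.continuous
  have := hv.continuous
  refine (mul_eq_zero.1 ?_).resolve_left (sub_ne_zero.2 hne)
  rw [← intervalIntegral.integral_const_mul, intervalIntegral.integral_eq_sub_of_hasDerivAt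
    (f := fun x => y x * v' x - y' x * v x)
    (fun x _ => ?_) (Continuous.intervalIntegrable (by fun_prop) _ _)]
  · simp [h.left_boundary, h.right_boundary, hv.left_boundary, hv.right_boundary]
  · exact (((h.hasDerivAt x).mul (hv.hasDerivAt_deriv x)).sub
      ((h.hasDerivAt_deriv x).mul (hv.hasDerivAt x))).congr_deriv (by ring)

/-- Pohozaev-type identity: the multiplier `x` applied to two eigenfunctions. -/
theorem boundary_deriv_mul_deriv (h : IsDirichletEigenfunction ε κ y y')
    (hv : IsDirichletEigenfunction ε ν v v') (hne : κ ≠ ν) :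
    y' 1 * v' 1 + y' (-1) * v' (-1) = ∫ x in (-1 : ℝ)..1,
      x * (3 * I * ε * (y x * v x) + (κ - ν) / 2 * (y' x * v x - y x * v' x)) := by
  have := h.continuous
  have := h.continuous_deriv
  have := hv.continuous
  have := hv.continuous_deriv
  have hint : ∫ x in (-1 : ℝ)..1,
      (x * (3 * I * ε * (y x * v x) + (κ - ν) / 2 * (y' x * v x - y x * v' x)) +
        ((κ + ν) / 2 + κ) * (y x * v x)) = y' 1 * v' 1 + y' (-1) * v' (-1) := by
    rw [intervalIntegral.integral_eq_sub_of_hasDerivAt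
      (f := fun x => (0 + x * 1) * (y' x * v' x + ((κ + ν) / 2 + x * (I * ε)) * (y x * v x)) -
        y' x * v x) (fun x _ => ?_) (Continuous.intervalIntegrable (by fun_prop) _ _)]
    · simp [h.left_boundary, h.right_boundary, hv.left_boundary, hv.right_boundary]
    · refine (((hasDerivAt_add_ofReal_mul 0 1 x).mul
        (((h.hasDerivAt_deriv x).mul (hv.hasDerivAt_deriv x)).add
          ((hasDerivAt_add_ofReal_mul ((κ + ν) / 2) (I * ε) x).mul
            ((h.hasDerivAt x).mul (hv.hasDerivAt x))))).sub
        ((h.hasDerivAt_deriv x).mul (hv.hasDerivAt x))).congr_deriv ?_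
      simp only [Pi.add_apply, Pi.mul_apply]
      ring
  rw [← hint, intervalIntegral.integral_add, intervalIntegral.integral_const_mul,
    h.integral_mul_eq_zero hv hne, mul_zero, add_zero]
  all_goals exact Continuous.intervalIntegrable (by fun_prop) _ _

theorem norm_boundary_deriv_mul_deriv_le (h : IsDirichletEigenfunction ε κ y y')
    (hv : IsDirichletEigenfunction ε ν v v') (hε : 0 ≤ ε) (hne : κ ≠ ν) :
    ‖y' 1 * v' 1 + y' (-1) * v' (-1)‖ ≤ 3 * ε * (∫ x in (-1 : ℝ)..1, ‖y x‖ * ‖v x‖) +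
      ‖(κ - ν) / 2‖ *
        ((∫ x in (-1 : ℝ)..1, ‖v x‖ * ‖y' x‖) + ∫ x in (-1 : ℝ)..1, ‖y x‖ * ‖v' x‖) := by
  have := h.continuous
  have := h.continuous_deriv
  have := hv.continuous
  have := hv.continuous_deriv
  rw [h.boundary_deriv_mul_deriv hv hne, ← intervalIntegral.integral_add,
    ← intervalIntegral.integral_const_mul, ← intervalIntegral.integral_const_mul,
    ← intervalIntegral.integral_add]
  · refine intervalIntegral.norm_integral_le_of_norm_le (by norm_num) (.of_forall fun x hx => ?_)
      (Continuous.intervalIntegrable (by fun_prop) _ _)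
    have hx1 : ‖(x : ℂ)‖ ≤ 1 := by simpa [abs_le] using Ioc_subset_Icc_self hx
    rw [norm_mul]
    refine (mul_le_of_le_one_left (norm_nonneg _) hx1).trans
      ((norm_add_le _ _).trans (add_le_add (by simp [abs_of_nonneg hε]) ?_))
    rw [norm_mul]
    refine mul_le_mul_of_nonneg_left ((norm_sub_le _ _).trans_eq ?_) (norm_nonneg _)
    rw [norm_mul, norm_mul, mul_comm]
  all_goals exact Continuous.intervalIntegrable (by fun_prop) _ _

/-- The reflection `x ↦ conj (y (-x))` is an eigenfunction with eigenvalue `conj κ ≠ κ`. -/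
theorem norm_mixed_boundary_deriv_le (h : IsDirichletEigenfunction ε κ y y') (hε : 0 ≤ ε)
    (hκ : κ.im ≠ 0) :
    ‖y' 1 * conj (y' (-1)) + y' (-1) * conj (y' 1)‖ ≤
      (3 * ε + 2 * ε * √κ.re) * sqIntegral y := by
  have hN := sqIntegral_conj_comp_neg y
  have hN' := h.reflect.sqIntegral_deriv
  rw [conj_re, hN] at hN'
  have hcoeff : ‖(κ - conj κ) / 2‖ ≤ ε := by simpa [sub_conj] using h.abs_im_le hε
  have hyv := integral_norm_mul_norm_le_mul_sqIntegral h.continuous h.reflect.continuous (K := 1)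
    (by rw [hN, one_mul])
  rw [Real.sqrt_one, one_mul] at hyv
  have hvy' := integral_norm_mul_norm_le_mul_sqIntegral h.reflect.continuous h.continuous_deriv
    (by rw [hN, h.sqIntegral_deriv])
  rw [hN] at hvy'
  have hyv' := integral_norm_mul_norm_le_mul_sqIntegral h.continuous h.reflect.continuous_deriv hN'
  have hlhs : y' 1 * conj (y' (-1)) + y' (-1) * conj (y' 1) =
      -(y' 1 * -conj (y' (-1)) + y' (-1) * -conj (y' (- -1))) := by
    rw [neg_neg]
    ring
  rw [hlhs, norm_neg]
  calc _ ≤ _ := h.norm_boundary_deriv_mul_deriv_le h.reflect hε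
        fun hκ' => hκ (conj_eq_iff_im.1 hκ'.symm)
    _ ≤ 3 * ε * sqIntegral y + ε * (√κ.re * sqIntegral y + √κ.re * sqIntegral y) := by
        have := sqIntegral_nonneg y
        refine add_le_add (by gcongr) ?_
        exact (mul_le_mul_of_nonneg_left (add_le_add hvy' hyv') (norm_nonneg _)).trans
          (mul_le_mul_of_nonneg_right hcoeff (by positivity))
    _ = _ := by ring

theorem sqrt_re_le (h : IsDirichletEigenfunction ε κ y y') (hε : 0 ≤ ε) (hκ : κ.im ≠ 0) :
    √κ.re ≤ 7 * ε := by
  have hhalf := h.one_half_le_sqrt_re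
  have hsq : √κ.re * √κ.re = κ.re :=
    Real.mul_self_sqrt (Real.sqrt_pos.1 (one_half_pos.trans_le hhalf)).le
  have hmain : 2 * κ.re * sqIntegral y ≤ (6 * ε * √κ.re + 4 * ε) * sqIntegral y := by
    linarith [h.le_sq_norm_deriv_add_sq_norm_deriv hε, h.norm_sq_deriv_sub_sq_deriv_le hε,
      h.norm_mixed_boundary_deriv_le hε hκ, sq_norm_add_sq_norm_le (y' 1) (y' (-1))]
  have hquad := le_of_mul_le_mul_right hmain h.sqIntegral_pos
  exact le_of_mul_le_mul_right (by nlinarith) (one_half_pos.trans_le hhalf)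

end IsDirichletEigenfunction

section Continuation

theorem exists_sphere_ne_zero {f : ℂ → ℂ} (hf : Differentiable ℂ f) {z₁ : ℂ} (hz₁ : f z₁ ≠ 0)
    {z₀ : ℂ} {U : Set ℂ} (hU : U ∈ 𝓝 z₀) :
    ∃ r > 0, Metric.closedBall z₀ r ⊆ U ∧ ∀ z ∈ Metric.sphere z₀ r, f z ≠ 0 := by
  have hana : AnalyticOnNhd ℂ f univ := fun z _ => hf.analyticAt z
  have hisolated : ∀ᶠ z in 𝓝 z₀, z ≠ z₀ → f z ≠ 0 := eventually_nhdsWithin_iff.1 <|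
    (hf.analyticAt z₀).eventually_eq_zero_or_eventually_ne_zero.resolve_left fun hzero =>
      hz₁ <| congrFun (hana.eq_of_eventuallyEq (fun _ _ => analyticAt_const) hzero) z₁
  obtain ⟨r, hr, hball⟩ := Metric.nhds_basis_closedBall.mem_iff.1 (inter_mem hU hisolated)
  exact ⟨r, hr, fun z hz => (hball hz).1, fun z hz =>
    (hball (Metric.sphere_subset_closedBall hz)).2 (Metric.ne_of_mem_sphere hz hr.ne')⟩

theorem exists_eq_zero_of_norm_lt {f : ℂ → ℂ} (hf : Differentiable ℂ f) {z₀ : ℂ} {r c : ℝ}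
    (hr : 0 < r) (hsphere : ∀ z ∈ Metric.sphere z₀ r, c ≤ ‖f z - f z₀‖) (hz₀ : ‖f z₀‖ < c / 2) :
    ∃ z ∈ Metric.closedBall z₀ r, f z = 0 := by
  have hc : 0 < c := by linarith [norm_nonneg (f z₀)]
  have hana : AnalyticOnNhd ℂ f univ := fun z _ => hf.analyticAt z
  have hne : ∃ᶠ z in 𝓝 z₀, f z ≠ f z₀ := fun hconst => by
    obtain ⟨z, hz⟩ := (NormedSpace.sphere_nonempty (x := z₀)).2 hr.le
    have heq := congrFun (hana.eq_of_eventuallyEq (g := fun _ => f z₀)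
      (fun _ _ => analyticAt_const) (hconst.mono fun _ => not_not.1)) z
    have := hsphere z hz
    rw [heq, sub_self, norm_zero] at this
    linarith
  exact hf.diffContOnCl.ball_subset_image_closedBall hr hsphere hne
    (by rwa [Metric.mem_ball, dist_zero_left])

variable {X : Type*} [TopologicalSpace X] {F F' : X → ℂ → ℂ}

theorem eventually_exists_mem_eq_zero (hF : Continuous ↿F) (hd : ∀ x, Differentiable ℂ (F x))
    {x₀ : X} {z₀ z₁ : ℂ} (hz₀ : F x₀ z₀ = 0) (hz₁ : F x₀ z₁ ≠ 0) {U : Set ℂ} (hU : U ∈ 𝓝 z₀) :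
    ∀ᶠ x in 𝓝 x₀, ∃ z ∈ U, F x z = 0 := by
  obtain ⟨r, hr, hrU, hne⟩ := exists_sphere_ne_zero (hd x₀) hz₁ hU
  have hcompact := isCompact_sphere z₀ r
  obtain ⟨w, hw, hmin⟩ := hcompact.exists_isMinOn (NormedSpace.sphere_nonempty.2 hr.le)
    (hd x₀).continuous.norm.continuousOn
  obtain ⟨c, hc, hcw⟩ := exists_between (norm_pos_iff.2 (hne w hw))
  have hsphere : ∀ᶠ x in 𝓝 x₀, ∀ z ∈ Metric.sphere z₀ r, c < ‖F x z - F x z₀‖ := by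
    refine hcompact.eventually_forall_of_forall_eventually fun z hz => ?_
    have hcont : Continuous fun p : X × ℂ => ‖F p.1 p.2 - F p.1 z₀‖ :=
      (hF.sub (hF.comp (continuous_fst.prodMk continuous_const))).norm
    refine (hcont.tendsto (x₀, z)).eventually_const_lt ?_
    simpa only [hz₀, sub_zero] using hcw.trans_le (hmin hz)
  have hcenter : ∀ᶠ x in 𝓝 x₀, ‖F x z₀‖ < c / 2 := by
    have hcont : Continuous fun x => ‖F x z₀‖ :=
      (hF.comp (continuous_id.prodMk continuous_const)).norm
    exact (hcont.tendsto x₀).eventually_lt_const (by simpa only [hz₀, norm_zero] using half_pos hc)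
  filter_upwards [hsphere, hcenter] with x hxs hxc
  obtain ⟨z, hz, hz0⟩ := exists_eq_zero_of_norm_lt (hd x) hr (fun z hz => (hxs z hz).le) hxc
  exact ⟨z, hrU hz, hz0⟩

theorem injOn_of_norm_deriv_sub_lt {f f' : ℂ → ℂ} (hf : ∀ z, HasDerivAt f (f' z) z) {s : Set ℂ}
    (hs : Convex ℝ s) {a : ℂ} {C : ℝ} (hC : C < ‖a‖) (hbound : ∀ z ∈ s, ‖f' z - a‖ ≤ C) :
    InjOn f s := by
  intro z hz y hy hzy
  have hg : ∀ x ∈ s, HasDerivWithinAt (fun x => f x - a * x) (f' x - a) s x := fun x _ => by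
    exact ((hf x).fun_sub (hasDerivAt_const_mul a)).hasDerivWithinAt
  have hle := hs.norm_image_sub_le_of_norm_hasDerivWithin_le hg hbound hz hy
  rw [hzy, sub_sub_sub_cancel_left, ← mul_sub, norm_mul, norm_sub_rev z y] at hle
  by_contra hne
  have : 0 < ‖y - z‖ := norm_pos_iff.2 (sub_ne_zero.2 (Ne.symm hne))
  exact absurd hle (not_le.2 (by gcongr))

theorem eventually_injOn_of_deriv_ne_zero (hF : ∀ x z, HasDerivAt (F x) (F' x z) z)
    (hF' : Continuous ↿F') {x₀ : X} {z₀ : ℂ} (hne : F' x₀ z₀ ≠ 0) :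
    ∃ U ∈ 𝓝 z₀, ∀ᶠ x in 𝓝 x₀, InjOn (F x) U := by
  have hpos : 0 < ‖F' x₀ z₀‖ := norm_pos_iff.2 hne
  have hnear : ∀ᶠ p in 𝓝 x₀ ×ˢ 𝓝 z₀, ‖F' p.1 p.2 - F' x₀ z₀‖ < ‖F' x₀ z₀‖ / 2 := by
    rw [← nhds_prod_eq]
    have hcont : Continuous fun p : X × ℂ => ‖F' p.1 p.2 - F' x₀ z₀‖ :=
      (hF'.sub continuous_const).norm
    exact (hcont.tendsto (x₀, z₀)).eventually_lt_const
      (by simpa only [sub_self, norm_zero] using half_pos hpos)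
  obtain ⟨p, hp, q, hq, hpq⟩ := Filter.eventually_prod_iff.1 hnear
  obtain ⟨r, hr, hball⟩ := Metric.eventually_nhds_iff_ball.1 hq
  exact ⟨Metric.ball z₀ r, Metric.ball_mem_nhds z₀ hr, hp.mono fun x hx =>
    injOn_of_norm_deriv_sub_lt (hF x) (convex_ball z₀ r) (half_lt_self hpos)
      fun z hz => (hpq hx (hball z hz)).le⟩

theorem isClosed_setOf_forall_eq_zero_im_eq_zero (hF : Continuous ↿F)
    (hd : ∀ x, Differentiable ℂ (F x)) (hne : ∀ x, ∃ z, F x z ≠ 0) :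
    IsClosed {x | ∀ z, F x z = 0 → z.im = 0} := by
  refine ⟨isOpen_iff_mem_nhds.2 fun x hx => ?_⟩
  obtain ⟨z, hz, him⟩ : ∃ z, F x z = 0 ∧ z.im ≠ 0 := by
    simpa only [mem_compl_iff, mem_ofPred_eq, not_forall, exists_prop] using hx
  obtain ⟨z₁, hz₁⟩ := hne x
  have hU : {z : ℂ | z.im ≠ 0} ∈ 𝓝 z :=
    (isOpen_ne_fun continuous_im continuous_const).mem_nhds him
  filter_upwards [eventually_exists_mem_eq_zero hF hd hz hz₁ hU] with y ⟨w, hw, hw0⟩ hy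
  exact hw (hy w hw0)

/-- A nonreal zero near a simple real zero would come with its conjugate, against local
injectivity. -/
theorem isOpen_setOf_forall_eq_zero_im_eq_zero (hF : Continuous ↿F)
    (hd : ∀ x z, HasDerivAt (F x) (F' x z) z) (hF' : Continuous ↿F')
    (hconj : ∀ x z, F x z = 0 → F x (conj z) = 0)
    {M : ℝ} (hM : ∀ x z, F x z = 0 → z.im ≠ 0 → ‖z‖ ≤ M)
    (hsimple : ∀ x z, F x z = 0 → z.im = 0 → F' x z ≠ 0) :
    IsOpen {x | ∀ z, F x z = 0 → z.im = 0} := by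
  refine isOpen_iff_mem_nhds.2 fun x₀ hx₀ => ?_
  have hlocal : ∀ᶠ x in 𝓝 x₀, ∀ z ∈ Metric.closedBall (0 : ℂ) M, F x z = 0 → z.im = 0 := by
    refine (isCompact_closedBall 0 M).eventually_forall_of_forall_eventually fun z₀ _ => ?_
    by_cases hz₀ : F x₀ z₀ = 0
    · have hreal : conj z₀ = z₀ := conj_eq_iff_im.2 (hx₀ z₀ hz₀)
      obtain ⟨U, hU, hinj⟩ :=
        eventually_injOn_of_deriv_ne_zero hd hF' (hsimple x₀ z₀ hz₀ (hx₀ z₀ hz₀))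
      have hU' : conj ⁻¹' U ∈ 𝓝 z₀ :=
        continuous_conj.continuousAt.preimage_mem_nhds (by rwa [hreal])
      rw [nhds_prod_eq]
      filter_upwards [hinj.prod_mk (inter_mem hU hU')] with ⟨x, z⟩ ⟨hx, hz, hz'⟩ h0
      exact conj_eq_iff_im.1 (hx hz' hz ((hconj x z h0).trans h0.symm))
    · filter_upwards [hF.continuousAt.eventually_ne (x := (x₀, z₀)) hz₀] with p hp h0
      exact absurd h0 hp
  filter_upwards [hlocal] with x hx z hz
  by_contra him
  exact him (hx z (mem_closedBall_zero_iff.2 (hM x z hz him)) hz)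

theorem forall_eq_zero_im_eq_zero [PreconnectedSpace X] (hF : Continuous ↿F)
    (hd : ∀ x z, HasDerivAt (F x) (F' x z) z) (hF' : Continuous ↿F')
    (hconj : ∀ x z, F x z = 0 → F x (conj z) = 0)
    {M : ℝ} (hM : ∀ x z, F x z = 0 → z.im ≠ 0 → ‖z‖ ≤ M)
    (hsimple : ∀ x z, F x z = 0 → z.im = 0 → F' x z ≠ 0)
    {x₀ : X} (hx₀ : ∀ z, F x₀ z = 0 → z.im = 0) (x : X) (z : ℂ) (hz : F x z = 0) :
    z.im = 0 := by
  have hne : ∀ x, ∃ z, F x z ≠ 0 := fun x => ⟨(|M| + 1 : ℝ) + I, fun h0 => by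
    have hle := (re_le_norm _).trans (hM x _ h0 (by simp))
    simp only [add_re, ofReal_re, I_re, add_zero] at hle
    linarith [le_abs_self M]⟩
  have hclopen : IsClopen {x | ∀ z, F x z = 0 → z.im = 0} :=
    ⟨isClosed_setOf_forall_eq_zero_im_eq_zero hF (fun x z => (hd x z).differentiableAt) hne,
      isOpen_setOf_forall_eq_zero_im_eq_zero hF hd hF' hconj hM hsimple⟩
  exact (hclopen.eq_univ ⟨x₀, hx₀⟩ ▸ mem_univ x :) z hz

end Continuation

section DirichletDeterminant

/-- The characteristic determinant of `-y'' = (d² m + i d³ x) y`, `y(-1) = y(1) = 0`, whose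
solutions are `x ↦ w(m + x d i)` with `w'' = z w`. After `x ↦ -x` this is the model problem with
`ε = d³` and `λ = m / d`. -/
def dirichletDet (f g : ℂ → ℂ) (d : ℝ) (m : ℂ) : ℂ := airyKernel f g (m + d * I) (m - d * I)

/-- The derivative of `dirichletDet f g d m` in `m`. -/
def dirichletDetDeriv (f f' g g' : ℂ → ℂ) (d : ℝ) (m : ℂ) : ℂ :=
  airyKernelDeriv f f' g g' (m + d * I) (m - d * I) -
    airyKernelDeriv f f' g g' (m - d * I) (m + d * I)

theorem exists_mem_Icc_ne_zero_of_deriv_ne_zero {y : ℝ → ℂ} {c : ℂ} {a b : ℝ} (hab : a < b)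
    (hy : HasDerivAt y c a) (hc : c ≠ 0) : ∃ x ∈ Icc a b, y x ≠ 0 := by
  by_contra! hzero
  have ha : a ∈ Icc a b := left_mem_Icc.2 hab.le
  exact hc <| (uniqueDiffOn_Icc hab a ha).eq_deriv _ hy.hasDerivWithinAt <|
    (hasDerivWithinAt_const a (Icc a b) 0).congr hzero (hzero a ha)

theorem arg_eq_arctan_of_re_pos {z : ℂ} (hz : 0 < z.re) : z.arg = Real.arctan (z.im / z.re) := by
  have harg := abs_lt.1 (Complex.abs_arg_lt_pi_div_two_iff.2 (.inl hz))
  rw [← Complex.tan_arg, Real.arctan_tan harg.1 harg.2]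

namespace IsAiryBasis

variable {f f' g g' : ℂ → ℂ} {d : ℝ} {m : ℂ}

theorem hasDerivAt_dirichletDet (h : IsAiryBasis f f' g g') (d : ℝ) (m : ℂ) :
    HasDerivAt (dirichletDet f g d) (dirichletDetDeriv f f' g g' d m) m := by
  refine (h.hasDerivAt_kernel ((hasDerivAt_id m).add_const (d * I))
    ((hasDerivAt_id m).sub_const (d * I))).congr_deriv ?_
  simp only [dirichletDetDeriv, id, mul_one]

theorem continuous_dirichletDet (h : IsAiryBasis f f' g g') :
    Continuous fun p : ℝ × ℂ => dirichletDet f g p.1 p.2 := by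
  have hf := h.left.continuous
  have hg := h.right.continuous
  unfold dirichletDet airyKernel
  fun_prop

theorem continuous_dirichletDetDeriv (h : IsAiryBasis f f' g g') :
    Continuous fun p : ℝ × ℂ => dirichletDetDeriv f f' g g' p.1 p.2 := by
  have hf := h.left.continuous
  have hg := h.right.continuous
  have hf' := h.left.continuous_deriv
  have hg' := h.right.continuous_deriv
  unfold dirichletDetDeriv airyKernelDeriv
  fun_prop

theorem dirichletDet_conj (h : IsAiryBasis f f' g g') (d : ℝ) (m : ℂ) :
    dirichletDet f g d (conj m) = -conj (dirichletDet f g d m) := by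
  rw [dirichletDet, dirichletDet, ← map_neg, ← airyKernel_swap, ← h.kernel_conj]
  congr 1 <;> simp [sub_eq_add_neg]

theorem isDirichletEigenfunction_kernel (h : IsAiryBasis f f' g g') (hd : d ≠ 0)
    (hm : dirichletDet f g d m = 0) :
    IsDirichletEigenfunction (d ^ 3) ((d ^ 2 : ℝ) * m)
      (fun x => airyKernel f g (m + x * (d * I)) (m - d * I))
      (fun x => airyKernelDeriv f f' g g' (m + x * (d * I)) (m - d * I) * (d * I)) := by
  have hw := h.isAirySolution_kernel (m - d * I)
  have hleft : m + (-1 : ℝ) * (d * I) = m - d * I := by push_cast; ring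
  have hright : m + (1 : ℝ) * (d * I) = m + d * I := by push_cast; ring
  refine ⟨fun x => hw.hasDerivAt_line m (d * I) x, fun x =>
    ((hw.hasDerivAt_deriv_line m (d * I) x).mul_const (d * I)).congr_deriv ?_, ?_, ?_,
    exists_mem_Icc_ne_zero_of_deriv_ne_zero (by norm_num) (hw.hasDerivAt_line m (d * I) (-1)) ?_⟩
  · push_cast
    linear_combination
      d ^ 2 * (m + x * (d * I)) * airyKernel f g (m + x * (d * I)) (m - d * I) * I_sq
  · rw [hleft, airyKernel_self]
  · rwa [hright]
  · rw [hleft, h.kernelDeriv_self, one_mul]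
    exact mul_ne_zero (ofReal_ne_zero.2 hd) I_ne_zero

theorem one_le_and_norm_le_of_dirichletDet_eq_zero (h : IsAiryBasis f f' g g') (hd : 0 < d)
    (hm : dirichletDet f g d m = 0) (him : m.im ≠ 0) :
    1 ≤ 14 * d ^ 3 ∧ ‖m‖ ≤ 49 * d ^ 4 + d := by
  have hy := h.isDirichletEigenfunction_kernel hd.ne' hm
  have hd2 : 0 < d ^ 2 := by positivity
  have hd3 : 0 ≤ d ^ 3 := by positivity
  have hκ : ((d ^ 2 : ℝ) * m).im ≠ 0 := by
    rw [im_ofReal_mul]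
    exact mul_ne_zero hd2.ne' him
  have hlow := hy.one_half_le_sqrt_re
  have hupp := hy.sqrt_re_le hd3 hκ
  have himle := hy.abs_im_le hd3
  rw [im_ofReal_mul, abs_mul, abs_of_pos hd2] at himle
  rw [re_ofReal_mul] at hlow hupp
  have hre : 0 < d ^ 2 * m.re := Real.sqrt_pos.1 (by linarith)
  refine ⟨by linarith, (Complex.norm_le_abs_re_add_abs_im m).trans (add_le_add ?_ ?_)⟩
  · rw [abs_of_pos (pos_of_mul_pos_right hre hd2.le)]
    refine le_of_mul_le_mul_left ?_ hd2
    calc d ^ 2 * m.re = √(d ^ 2 * m.re) ^ 2 := (Real.sq_sqrt hre.le).symm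
      _ ≤ (7 * d ^ 3) ^ 2 := by gcongr
      _ = d ^ 2 * (49 * d ^ 4) := by ring
  · exact le_of_mul_le_mul_left (himle.trans_eq (by ring)) hd2

theorem dirichletDetDeriv_ne_zero (h : IsAiryBasis f f' g g') {μ : ℝ} (hd : 0 < d)
    (hray : ∀ t ∈ Ioc 0 (2 * d / √3), f (t * sixthRoot) ≠ 0)
    (hμ : dirichletDet f g d μ = 0) : dirichletDetDeriv f f' g g' d μ ≠ 0 := by
  have hconj : (μ : ℂ) - d * I = conj (μ + d * I) := by simp [sub_eq_add_neg]
  rw [dirichletDet, hconj] at hμ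
  rw [dirichletDetDeriv, hconj, sub_ne_zero]
  rcases le_or_gt μ (d / √3) with hle | hlt
  · have hdecomp : (μ + d * I : ℂ) = (μ - d / √3 : ℝ) + (2 * d / √3 : ℝ) * sixthRoot := by
      apply Complex.ext
      · simp only [add_re, re_ofReal_mul, sixthRoot_re, ofReal_re, I_re]
        ring
      · simp only [add_im, im_ofReal_mul, sixthRoot_im, ofReal_im, I_im]
        field_simp
    rw [hdecomp] at hμ ⊢
    exact h.kernelDeriv_conj_ne_of_left_ray_ne_zero (by linarith) (by positivity) hray hμ
  · have hμ0 : 0 < μ := lt_trans (by positivity) hlt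
    have harg : (μ + d * I : ℂ).arg = Real.arctan (d / μ) := by
      rw [arg_eq_arctan_of_re_pos] <;> simp [hμ0]
    refine h.kernelDeriv_conj_ne_of_mem_sector ?_ ?_ hμ
    · rw [harg, Real.arctan_pos]
      positivity
    · rw [harg, ← Real.arctan_sqrt_three, Real.arctan_lt_arctan_iff, div_lt_iff₀ hμ0]
      exact (div_lt_iff₀' (by positivity)).1 hlt

theorem im_eq_zero_of_dirichletDet_eq_zero (h : IsAiryBasis f f' g g') (hd : 0 < d)
    (hray : ∀ t ∈ Ioc 0 (2 * d / √3), f (t * sixthRoot) ≠ 0)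
    (hm : dirichletDet f g d m = 0) : m.im = 0 := by
  have : PreconnectedSpace (Ioc 0 d) := Subtype.preconnectedSpace isPreconnected_Ioc
  have hbound (x : Ioc 0 d) (z : ℂ) (hz : dirichletDet f g x z = 0) (him : z.im ≠ 0) :
      ‖z‖ ≤ 49 * d ^ 4 + d := by
    obtain ⟨hx, hxd⟩ := x.2
    exact (h.one_le_and_norm_le_of_dirichletDet_eq_zero hx hz him).2.trans (by gcongr)
  have hsimple (x : Ioc 0 d) (z : ℂ) (hz : dirichletDet f g x z = 0) (him : z.im = 0) :
      dirichletDetDeriv f f' g g' x z ≠ 0 := by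
    obtain ⟨hx, hxd⟩ := x.2
    rw [← conj_eq_iff_re.1 (conj_eq_iff_im.2 him)] at hz ⊢
    exact h.dirichletDetDeriv_ne_zero hx
      (fun t ht => hray t ⟨ht.1, ht.2.trans (by gcongr)⟩) hz
  have hsmall : ∀ z, dirichletDet f g (min d (1 / 3)) z = 0 → z.im = 0 := fun z hz => by
    have hpos : 0 < min d (1 / 3) := lt_min hd (by norm_num)
    have hpow : min d (1 / 3) ^ 3 ≤ (1 / 3) ^ 3 := by
      gcongr
      exact min_le_right _ _
    by_contra him
    linarith [(h.one_le_and_norm_le_of_dirichletDet_eq_zero hpos hz him).1]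
  have hval : Continuous fun p : Ioc 0 d × ℂ => ((p.1 : ℝ), p.2) := by fun_prop
  exact forall_eq_zero_im_eq_zero (F := fun x : Ioc 0 d => dirichletDet f g x)
    (F' := fun x : Ioc 0 d => dirichletDetDeriv f f' g g' x)
    (h.continuous_dirichletDet.comp hval) (fun x z => h.hasDerivAt_dirichletDet x z)
    (h.continuous_dirichletDetDeriv.comp hval)
    (fun x z hz => by rw [h.dirichletDet_conj, hz, map_zero, neg_zero]) hbound hsimple
    (x₀ := ⟨min d (1 / 3), lt_min hd (by norm_num), min_le_left _ _⟩) hsmall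
    ⟨d, hd, le_rfl⟩ m hm

end IsAiryBasis

end DirichletDeterminant

section StandardAiryFunctions

theorem IsAiry.isAirySolution {w : ℂ → ℂ} {a b : ℝ} (hw : IsAiry w a b) :
    IsAirySolution w (deriv w) :=
  ⟨fun z => (hw.1 z).hasDerivAt, fun z => hw.2.2.1 z ▸ (hw.2.1 z).hasDerivAt⟩

variable {Ai Bi Ai' Bi' : ℂ → ℂ}

theorem IsAirySolution.uminus (hA : IsAirySolution Ai Ai') (hB : IsAirySolution Bi Bi') :
    IsAirySolution (Uminus Ai Bi) (Uminus Ai' Bi') :=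
  (hA.const_mul _).add hB

theorem IsAirySolution.uplus (hA : IsAirySolution Ai Ai') (hB : IsAirySolution Bi Bi') :
    IsAirySolution (Uplus Ai Bi) (Uplus Ai' Bi') :=
  (hA.const_mul _).add hB

theorem uminus_zero (hAi : IsAiryAi Ai) (hBi : IsAiryBi Bi) : Uminus Ai Bi 0 = 0 := by
  have hpow : √3 * (3 : ℝ) ^ (-(2 : ℝ) / 3) = (3 : ℝ) ^ (-(1 : ℝ) / 6) := by
    rw [Real.sqrt_eq_rpow, ← Real.rpow_add (by norm_num)]
    norm_num
  rw [Uminus, hAi.2.2.2.1, hBi.2.2.2.1, ← hpow]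
  push_cast
  ring

theorem uplus_zero_ne_zero (hAi : IsAiryAi Ai) (hBi : IsAiryBi Bi) : Uplus Ai Bi 0 ≠ 0 := by
  rw [Uplus, hAi.2.2.2.1, hBi.2.2.2.1]
  norm_cast
  positivity

theorem uminus_deriv_zero_ne_zero (hAi : IsAiryAi Ai) (hBi : IsAiryBi Bi) :
    Uminus (deriv Ai) (deriv Bi) 0 ≠ 0 := by
  rw [Uminus, hAi.2.2.2.2, hBi.2.2.2.2, neg_div, ofReal_neg, neg_mul_neg]
  norm_cast
  positivity

theorem uplus_deriv_zero (hAi : IsAiryAi Ai) (hBi : IsAiryBi Bi) :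
    Uplus (deriv Ai) (deriv Bi) 0 = 0 := by
  have hpow : √3 * (3 : ℝ) ^ (-(1 : ℝ) / 3) = (3 : ℝ) ^ ((1 : ℝ) / 6) := by
    rw [Real.sqrt_eq_rpow, ← Real.rpow_add (by norm_num)]
    norm_num
  rw [Uplus, hAi.2.2.2.2, hBi.2.2.2.2, ← hpow]
  push_cast
  ring

theorem exists_isAiryBasis (hAi : IsAiryAi Ai) (hBi : IsAiryBi Bi) :
    ∃ (f f' g g' : ℂ → ℂ) (a b : ℂ), IsAiryBasis f f' g g' ∧ a ≠ 0 ∧ b ≠ 0 ∧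
      (∀ z, Uminus Ai Bi z = a * f z) ∧ ∀ z, Uplus Ai Bi z = b * g z := by
  have ha := uminus_deriv_zero_ne_zero hAi hBi
  have hb := uplus_zero_ne_zero hAi hBi
  have hA := IsAiry.isAirySolution hAi
  have hB := IsAiry.isAirySolution hBi
  refine ⟨_, _, _, _, _, _, ⟨(hA.uminus hB).const_mul _, (hA.uplus hB).const_mul _, ?_,
    inv_mul_cancel₀ ha, inv_mul_cancel₀ hb, ?_⟩, ha, hb,
    fun z => (mul_inv_cancel_left₀ ha _).symm, fun z => (mul_inv_cancel_left₀ hb _).symm⟩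
  · rw [uminus_zero hAi hBi, mul_zero]
  · rw [uplus_deriv_zero hAi hBi, mul_zero]

theorem airyW_eq_dirichletDet {f g : ℂ → ℂ} {a b : ℂ} (hf : ∀ z, Uminus Ai Bi z = a * f z)
    (hg : ∀ z, Uplus Ai Bi z = b * g z) (ε : ℝ) (l : ℂ) :
    airyW Ai Bi ε l = -(a * b / (2 * √3)) *
      dirichletDet f g (ε ^ ((1 : ℝ) / 3)) ((ε ^ ((1 : ℝ) / 3) : ℝ) * l) := by
  have hs : (√3 : ℂ) ≠ 0 := ofReal_ne_zero.2 (by positivity)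
  have hdet (z y : ℂ) : Ai z * Bi y - Ai y * Bi z =
      -(a * b / (2 * √3)) * airyKernel f g z y := calc
    _ = -(Uminus Ai Bi z * Uplus Ai Bi y - Uminus Ai Bi y * Uplus Ai Bi z) / (2 * √3) := by
      simp only [Uminus, Uplus]
      field_simp
      ring
    _ = _ := by
      rw [hf, hf, hg, hg, airyKernel]
      ring
  rw [airyW, hdet, dirichletDet, ← mul_add, ← mul_sub]

theorem two_mul_rpow_div_sqrt_three_lt {ε α : ℝ} (hε : 0 ≤ ε) (hα : 0 ≤ α)
    (h : ε < (√3 * α / 2) ^ 3) : 2 * ε ^ ((1 : ℝ) / 3) / √3 < α := by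
  have hpow : (ε ^ ((1 : ℝ) / 3)) ^ 3 = ε := by
    rw [one_div]
    exact Real.rpow_inv_natCast_pow hε three_ne_zero
  have hlt : ε ^ ((1 : ℝ) / 3) < √3 * α / 2 :=
    lt_of_pow_lt_pow_left₀ 3 (by positivity) (by rwa [hpow])
  rw [div_lt_iff₀ (by positivity)]
  linarith

theorem left_sixthRoot_ne_zero_of_lt_isLeast {f : ℂ → ℂ} {a : ℂ}
    (hf : ∀ z, Uminus Ai Bi z = a * f z) {α : ℝ}
    (hα : IsLeast (rayZeroModuli (Uminus Ai Bi)) α) {t : ℝ} (ht : 0 < t) (htα : t < α) :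
    f (t * sixthRoot) ≠ 0 := fun h0 =>
  htα.not_ge <| hα.2 ⟨ht, by rw [← sixthRoot, hf, h0, mul_zero]⟩

end StandardAiryFunctions

/-- For `0 < ε < ε₁ = (√3·α₁/2)³`, where `α₁` is the smallest modulus of a zero of `U₋`
on the ray `arg z = π/3`, every zero of `λ ↦ W(ε,λ)` is real and simple. -/
theorem all_eigenvalues_real_simple_before_first_collision (Ai Bi : ℂ → ℂ)
    (hAi : IsAiryAi Ai) (hBi : IsAiryBi Bi)
    (α₁ : ℝ) (hα₁ : IsLeast (rayZeroModuli (Uminus Ai Bi)) α₁)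
    (ε : ℝ) (hε : 0 < ε) (hε' : ε < (Real.sqrt 3 * α₁ / 2) ^ 3)
    (lam : ℂ) (hlam : airyW Ai Bi ε lam = 0) :
    lam.im = 0 ∧ deriv (airyW Ai Bi ε) lam ≠ 0 := by
  obtain ⟨f, f', g, g', a, b, h, ha, hb, hf, hg⟩ := exists_isAiryBasis hAi hBi
  set d : ℝ := ε ^ ((1 : ℝ) / 3)
  have hd : 0 < d := Real.rpow_pos_of_pos hε _
  have hdα : 2 * d / √3 < α₁ := two_mul_rpow_div_sqrt_three_lt hε.le hα₁.1.1.le hε'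
  have hray : ∀ t ∈ Ioc 0 (2 * d / √3), f (t * sixthRoot) ≠ 0 := fun t ht =>
    left_sixthRoot_ne_zero_of_lt_isLeast hf hα₁ ht.1 (ht.2.trans_lt hdα)
  have hc : -(a * b / (2 * √3 : ℂ)) ≠ 0 := by simp [ha, hb]
  have hzero : dirichletDet f g d (d * lam) = 0 :=
    (mul_eq_zero.1 ((airyW_eq_dirichletDet hf hg ε lam).symm.trans hlam)).resolve_left hc
  have him : lam.im = 0 := by
    simpa [hd.ne'] using h.im_eq_zero_of_dirichletDet_eq_zero hd hray hzero
  have hderiv : HasDerivAt (airyW Ai Bi ε)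
      (-(a * b / (2 * √3)) * (dirichletDetDeriv f f' g g' d (d * lam) * d)) lam :=
    (((h.hasDerivAt_dirichletDet d _).comp lam (hasDerivAt_const_mul (d : ℂ))).const_mul
      _).congr_of_eventuallyEq (.of_forall (airyW_eq_dirichletDet hf hg ε))
  have hreal : (d * lam : ℂ) = (d * lam.re : ℝ) := by apply Complex.ext <;> simp [him]
  rw [hderiv.deriv, hreal]
  exact ⟨him, mul_ne_zero hc (mul_ne_zero
    (h.dirichletDetDeriv_ne_zero hd hray (hreal ▸ hzero)) (ofReal_ne_zero.2 hd.ne'))⟩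
end
end
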